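/- Let θ be a reflection of the open or closed ladder of length N, let the real couplings satisfy |J_{(θi θj)}| = |J_{(ij)}| for all bonds, and let H̃ be the fermionic ladder Hamiltonian built from a Majorana family (b_k^x, b_k^y, b_k^z, c_k). Let C = (i_1, …, i_{2L}) be a loop with all couplings on its bonds nonzero and with θ i_k = i_{2L+1−k} for all k (so θ(C) = −C). Then there exists an eigenvector ψ of H̃ belonging to its least eigenvalue such that B̃(C) ψ = sgn(∏_{(ij)∈C} J_{(ij)}) ψ. In particular, if all couplings have the same sign, the loop C is vortex-free in this ground state: B̃(C) ψ = ψ. -/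

import Mathlib

noncomputable section
open scoped Classical

/-- A Majorana family indexed by `S`: self-adjoint operators on a nonzero
finite-dimensional complex Hilbert space satisfying the Clifford relations
`cᵢcⱼ + cⱼcᵢ = 2δᵢⱼ·I`. -/
def IsMajoranaFamily {V : Type*} [NormedAddCommGroup V] [InnerProductSpace ℂ V]
    [FiniteDimensional ℂ V] {S : Type*} (c : S → (V →ₗ[ℂ] V)) : Prop :=
  (∀ i, IsSelfAdjoint (c i)) ∧
    ∀ i j, c i * c j + c j * c i = if i = j then (2 : ℂ) • (1 : V →ₗ[ℂ] V) else 0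

/-- The least real eigenvalue of an endomorphism. -/
def leastEig {W : Type*} [AddCommGroup W] [Module ℂ W] (H : W →ₗ[ℂ] W) : ℝ :=
  sInf {t : ℝ | Module.End.HasEigenvalue H (t : ℂ)}

/-- Two operators anticommute. -/
def AntiCommute {A : Type*} [Ring A] (a b : A) : Prop := a * b = -(b * a)

/-- The three bond types of the ladder. -/
inductive BondType : Type
  | x | y | z
  deriving DecidableEq

/-- Bonds of the open ladder of length `N`, with vertices `0, …, 4N-1` (these are the
1-based labels `1, …, 4N` of the paper shifted by one): type-z bonds `(2j, 2j+1)` for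
`j = 0, …, 2N-1`; type-x bonds `(2j+1, 2j+2)` and type-y bonds `(2j, 2j+3)` for
`j = 0, …, 2N-2`. -/
def openBonds (N : ℕ) : List (ℕ × ℕ × BondType) :=
  ((List.range (2 * N)).map fun j => (2 * j, 2 * j + 1, BondType.z)) ++
    ((List.range (2 * N - 1)).map fun j => (2 * j + 1, 2 * j + 2, BondType.x)) ++
    ((List.range (2 * N - 1)).map fun j => (2 * j, 2 * j + 3, BondType.y))

/-- Bonds of the closed ladder: the open ladder together with the closing
type-x bond `(4N-1, 0)` and the closing type-y bond `(4N-2, 1)`. -/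
def closedBonds (N : ℕ) : List (ℕ × ℕ × BondType) :=
  openBonds N ++ [(4 * N - 1, 0, BondType.x), (4 * N - 2, 1, BondType.y)]

/-- The `16N` Majorana generators `b_k^α` and `c_k` of the fermionic ladder, indexed by
a vertex `k` together with `some α` (giving `b_k^α`) or `none` (giving `c_k`). -/
def ladderGen {A : Type*} (b : ℕ → BondType → A) (c : ℕ → A) :
    ℕ × Option BondType → A
  | (k, none) => c k
  | (k, some α) => b k α

/-- The `16N` operators `b_k^α, c_k` (`k < 4N`) form a Majorana family. -/
def IsLadderMajorana {V : Type*} [NormedAddCommGroup V] [InnerProductSpace ℂ V]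
    [FiniteDimensional ℂ V] (N : ℕ) (b : ℕ → BondType → (V →ₗ[ℂ] V))
    (c : ℕ → (V →ₗ[ℂ] V)) : Prop :=
  IsMajoranaFamily fun p : Fin (4 * N) × Option BondType => ladderGen b c ((p.1 : ℕ), p.2)

section LadderOps

variable {A : Type*} [Ring A] [Algebra ℂ A]

/-- The bond operator `u_{ij} = i b_i^t b_j^t` of the bond `e = (i, j, t)`. -/
def uOp (b : ℕ → BondType → A) (e : ℕ × ℕ × BondType) : A :=
  Complex.I • (b e.1 e.2.2 * b e.2.1 e.2.2)

/-- The spin representative `σ̃_m^α = i b_m^α c_m`. -/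
def sigmaOp (b : ℕ → BondType → A) (c : ℕ → A) (m : ℕ) (α : BondType) : A :=
  Complex.I • (b m α * c m)

/-- `γ_k^5 = b_k^x b_k^y b_k^z c_k`. -/
def gamma5 (b : ℕ → BondType → A) (c : ℕ → A) (k : ℕ) : A :=
  b k BondType.x * b k BondType.y * b k BondType.z * c k

/-- The term `⟨ij⟩ = J_{(ij)} u_{ij} i c_i c_j` of the fermionic ladder Hamiltonian
on the bond `e = (i, j, t)`. -/
def bondTerm (J : ℕ × ℕ → ℝ) (b : ℕ → BondType → A) (c : ℕ → A)
    (e : ℕ × ℕ × BondType) : A :=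
  (J (e.1, e.2.1) : ℂ) • (uOp b e * (Complex.I • (c e.1 * c e.2.1)))

/-- The fermionic ladder Hamiltonian `H̃ = Σ_{(ij)} J_{(ij)} u_{ij} i c_i c_j`,
each bond counted once. -/
def fermH (J : ℕ × ℕ → ℝ) (b : ℕ → BondType → A) (c : ℕ → A)
    (bonds : List (ℕ × ℕ × BondType)) : A :=
  (bonds.map (bondTerm J b c)).sum

end LadderOps

/-- A (cyclic) loop: a length `len`, the vertex `v k` at cyclic position `k < len`, and
the type `t k` of the bond joining `v k` to `v ((k+1) % len)`. -/
structure Loop where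
  len : ℕ
  v : ℕ → ℕ
  t : ℕ → BondType

/-- `L` is a loop of the lattice with bond list `bonds`: its vertices are distinct and
consecutive vertices are joined by a bond of `bonds` (traversed in either direction)
of the indicated type. -/
def Loop.IsLoopOf (L : Loop) (bonds : List (ℕ × ℕ × BondType)) : Prop :=
  3 ≤ L.len ∧
    (∀ k < L.len, ∀ k' < L.len, L.v k = L.v k' → k = k') ∧
    ∀ k < L.len,
      (L.v k, L.v ((k + 1) % L.len), L.t k) ∈ bonds ∨
        (L.v ((k + 1) % L.len), L.v k, L.t k) ∈ bonds

/-- The fermionic vortex operator `B̃(C) = -u_{i₁i₂} u_{i₂i₃} ⋯ u_{i_ℓ i₁}` of a loop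
(an ordered product around the loop). -/
def vortexOp {A : Type*} [Ring A] [Algebra ℂ A] (b : ℕ → BondType → A) (L : Loop) : A :=
  -((List.range L.len).map fun k => uOp b (L.v k, L.v ((k + 1) % L.len), L.t k)).prod

/-- A reflection of the ladder (with vertex set `{0, …, 4N-1}` and bond list `bonds`):
a fixed-point-free involution `θ` of the vertex set mapping bonds to bonds (preserving
types), together with a partition of the vertices into two sets `Λ₋, Λ₊` interchanged
by `θ`, such that every bond either has both endpoints on the same side or is of the
form `(i, θ i)`. -/
structure LadderReflection (N : ℕ) (bonds : List (ℕ × ℕ × BondType)) where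
  θ : ℕ → ℕ
  Λm : Finset ℕ
  Λp : Finset ℕ
  mapsV : ∀ v < 4 * N, θ v < 4 * N
  invol : ∀ v < 4 * N, θ (θ v) = v
  nofix : ∀ v < 4 * N, θ v ≠ v
  union : Λm ∪ Λp = Finset.range (4 * N)
  disj : Disjoint Λm Λp
  swap_m : ∀ v ∈ Λm, θ v ∈ Λp
  swap_p : ∀ v ∈ Λp, θ v ∈ Λm
  mapsB : ∀ e ∈ bonds,
    (θ e.1, θ e.2.1, e.2.2) ∈ bonds ∨ (θ e.2.1, θ e.1, e.2.2) ∈ bonds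
  sides : ∀ e ∈ bonds,
    (e.1 ∈ Λm ∧ e.2.1 ∈ Λm) ∨ (e.1 ∈ Λp ∧ e.2.1 ∈ Λp) ∨ θ e.1 = e.2.1 ∨ θ e.2.1 = e.1

/-!
The bond operators `u_e` are commuting involutions that commute with `H̃`, so the space splits
into `ℤ₂` gauge sectors, on each of which `H̃` is quadratic in the `c_k` with least energy
`-‖K‖₁ / 2` for a Hermitian matrix `K`. Gauge the crossing bonds to be nonnegative and write `K`
in blocks adapted to the two sides. Replacing the couplings within one side by minus the mirror
image of those within the other gives two further sectors, whose trace norms average to at least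
`‖K‖₁`. Starting from a sector that contains a ground state, both of them therefore contain one.
In such a reflected sector the values of `J_e u_e` along a bond of the loop and its mirror image
multiply to a square, up to gauge signs, while the loop traverses its two crossing bonds in
opposite directions, so the product of the values around the loop is negative. Since
`∏ J_e u_e = -|∏ J_e|`, the operator `B̃(C) = -∏ u_e` acts as `sgn ∏ J_e`.
-/

section TraceNorm

open Matrix
open scoped ComplexOrder MatrixOrder

variable {n : Type*} [Fintype n]

lemma trace_fromBlocks_eq_add {l m R : Type*} [Fintype l] [Fintype m] [AddCommMonoid R]
    (A : Matrix l l R) (B : Matrix l m R) (C : Matrix m l R) (D : Matrix m m R) :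
    (fromBlocks A B C D).trace = A.trace + D.trace := by
  simp [trace, Fintype.sum_sum_type]

lemma re_trace_mul_nonneg {A B : Matrix n n ℂ} (hA : 0 ≤ A) (hB : 0 ≤ B) :
    0 ≤ (A * B).trace.re := by
  obtain ⟨S, hS, rfl⟩ : ∃ S : Matrix n n ℂ, Sᴴ = S ∧ S * S = A :=
    ⟨CFC.sqrt A, (CFC.sqrt_nonneg A).posSemidef.isHermitian, CFC.sqrt_mul_sqrt_self A⟩
  have hconj : (Sᴴ * B * S).PosSemidef := hB.posSemidef.conjTranspose_mul_mul_same S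
  rw [hS] at hconj
  rw [Matrix.mul_assoc, trace_mul_comm]
  exact (Complex.nonneg_iff.1 hconj.trace_nonneg).1

lemma fromBlocks_diag_nonneg {l m : Type*} [Finite l] [Finite m] {X : Matrix l l ℂ}
    {Y : Matrix m m ℂ} (hX : 0 ≤ X) (hY : 0 ≤ Y) : 0 ≤ fromBlocks X 0 0 Y := by
  cases nonempty_fintype l
  cases nonempty_fintype m
  have hsq : fromBlocks X 0 0 Y =
      (fromBlocks (CFC.sqrt X) 0 0 (CFC.sqrt Y))ᴴ * fromBlocks (CFC.sqrt X) 0 0 (CFC.sqrt Y) := by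
    rw [fromBlocks_conjTranspose, fromBlocks_multiply,
      (CFC.sqrt_nonneg X).posSemidef.isHermitian.eq, (CFC.sqrt_nonneg Y).posSemidef.isHermitian.eq,
      CFC.sqrt_mul_sqrt_self X, CFC.sqrt_mul_sqrt_self Y]
    simp
  exact hsq ▸ (posSemidef_conjTranspose_mul_self _).nonneg

lemma abs_fromBlocks_offDiag (B : Matrix n n ℂ) :
    CFC.abs (fromBlocks 0 B Bᴴ 0) = fromBlocks (CFC.abs Bᴴ) 0 0 (CFC.abs B) := by
  refine CFC.sqrt_unique ?_ (fromBlocks_diag_nonneg (CFC.abs_nonneg _) (CFC.abs_nonneg _))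
  simp [fromBlocks_multiply, star_eq_conjTranspose, fromBlocks_conjTranspose, CFC.abs_mul_abs]

lemma abs_conjTranspose_add_abs_nonneg (B : Matrix n n ℂ) :
    0 ≤ CFC.abs Bᴴ + CFC.abs B + Complex.I • (B - Bᴴ) := by
  set M : Matrix (n ⊕ n) (n ⊕ n) ℂ := fromBlocks 0 B Bᴴ 0 with hM
  have hMsa : IsSelfAdjoint M := by
    rw [IsSelfAdjoint, star_eq_conjTranspose, hM, fromBlocks_conjTranspose]; simp
  have hle : 0 ≤ CFC.abs M - M := by
    rw [CFC.abs_sub_self M]; exact nsmul_nonneg (CFC.negPart_nonneg M) 2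
  have hcompress := hle.posSemidef.conjTranspose_mul_mul_same
    (fromRows (1 : Matrix n n ℂ) (-(Complex.I • 1)))
  convert hcompress.nonneg using 1
  rw [hM, abs_fromBlocks_offDiag, sub_eq_add_neg (fromBlocks _ _ _ _), fromBlocks_neg,
    fromBlocks_add, conjTranspose_fromRows_eq_fromCols_conjTranspose,
    fromCols_mul_fromBlocks, fromCols_mul_fromRows]
  simp only [conjTranspose_one, conjTranspose_neg, conjTranspose_smul, RCLike.star_def,
    Complex.conj_I, neg_smul, neg_neg, neg_zero, add_zero, zero_add, one_mul, mul_one, mul_neg,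
    Algebra.smul_mul_assoc, Algebra.mul_smul_comm, smul_add, smul_sub, smul_neg, smul_smul,
    Complex.I_mul_I, one_smul, neg_add_rev]
  abel

variable [DecidableEq n]

/-- The trace norm `‖K‖₁ = tr |K|` of a complex square matrix. -/
def traceNorm (K : Matrix n n ℂ) : ℝ := (CFC.abs K).trace.re

lemma le_one_of_isHermitian_of_mul_self_eq_one {U : Matrix n n ℂ} (hU : U.IsHermitian)
    (hU2 : U * U = 1) : U ≤ 1 := by
  have hsq : 1 - U = (1 / 2 : ℝ) • ((1 - U)ᴴ * (1 - U)) := by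
    rw [conjTranspose_sub, conjTranspose_one, hU.eq, Matrix.sub_mul, Matrix.mul_sub,
      Matrix.mul_sub, hU2, Matrix.mul_one, Matrix.one_mul, Matrix.mul_one]
    module
  rw [← sub_nonneg, hsq]
  exact smul_nonneg (by norm_num) (posSemidef_conjTranspose_mul_self _).nonneg

lemma re_trace_mul_le_traceNorm {U K : Matrix n n ℂ} (hK : K.IsHermitian)
    (hU : U.IsHermitian) (hU2 : U * U = 1) : (U * K).trace.re ≤ traceNorm K := by
  have hle : 0 ≤ 1 - U := sub_nonneg.2 (le_one_of_isHermitian_of_mul_self_eq_one hU hU2)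
  have hge : 0 ≤ 1 + U := by
    rw [← sub_neg_eq_add, sub_nonneg]
    exact le_one_of_isHermitian_of_mul_self_eq_one hU.neg (by rw [neg_mul_neg, hU2])
  have hsplit : CFC.abs K - U * K = (1 - U) * K⁺ + (1 + U) * K⁻ := by
    nth_rewrite 2 [← CFC.posPart_sub_negPart K hK.isSelfAdjoint]
    rw [← CFC.posPart_add_negPart K hK.isSelfAdjoint]
    noncomm_ring
  have h := add_nonneg (re_trace_mul_nonneg hle (CFC.posPart_nonneg K))
    (re_trace_mul_nonneg hge (CFC.negPart_nonneg K))
  rw [← Complex.add_re, ← trace_add, ← hsplit, trace_sub, Complex.sub_re] at h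
  exact sub_nonneg.1 h

lemma exists_trace_mul_eq_traceNorm {K : Matrix n n ℂ} (hK : K.IsHermitian) :
    ∃ U : Matrix n n ℂ, U.IsHermitian ∧ U * U = 1 ∧ (U * K).trace.re = traceNorm K := by
  let s : ℝ → ℝ := fun x => if x < 0 then -1 else 1
  have hs : ContinuousOn s (spectrum ℝ K) := (Matrix.finite_real_spectrum).continuousOn s
  have hK' : IsSelfAdjoint K := hK.isSelfAdjoint
  refine ⟨cfc s K, cfc_predicate s K, ?_, ?_⟩
  · rw [← cfc_mul s s K hs hs]
    have : (fun x => s x * s x) = fun _ => 1 := by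
      funext x; simp only [s]; split_ifs <;> norm_num
    rw [this, cfc_const_one ℝ K]
  · have habs : cfc s K * K = CFC.abs K := by
      nth_rewrite 2 [← cfc_id ℝ K]
      rw [← cfc_mul s id K hs continuousOn_id, CFC.abs_eq_cfc_norm K]
      congr 1
      funext x
      simp only [s, id, Real.norm_eq_abs]
      split_ifs with h
      · rw [abs_of_neg h, neg_one_mul]
      · rw [abs_of_nonneg (not_lt.1 h), one_mul]
    rw [habs, traceNorm]

lemma traceNorm_eq_sum_abs_eigenvalues {K : Matrix n n ℂ} (hK : K.IsHermitian) :
    traceNorm K = ∑ i, |hK.eigenvalues i| := by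
  have hK' : IsSelfAdjoint K := hK.isSelfAdjoint
  rw [traceNorm, CFC.abs_eq_cfc_norm K, hK.cfc_eq, Matrix.IsHermitian.cfc,
    Unitary.conjStarAlgAut_apply, trace_mul_cycle, Unitary.coe_star_mul_self, Matrix.one_mul,
    trace_diagonal]
  simp

/-- Tests the trace norm against the involution `[[A, iZ], [-iZ, -A]]`. -/
lemma re_trace_add_le_traceNorm_fromBlocks {P D A Z : Matrix n n ℂ} (hP : P.IsHermitian)
    (hD : D.IsHermitian) (hA : A.IsHermitian) (hZ : Z.IsHermitian) (hAZ : Commute A Z)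
    (hsq : A * A + Z * Z = 1) :
    2 * ((A * P).trace.re + (Z * D).trace.re) ≤
      traceNorm (fromBlocks P (Complex.I • D) (-(Complex.I • D)) (-P)) := by
  have hbound := re_trace_mul_le_traceNorm
    (U := fromBlocks A (Complex.I • Z) (-(Complex.I • Z)) (-A))
    (K := fromBlocks P (Complex.I • D) (-(Complex.I • D)) (-P))
    (by rw [IsHermitian, fromBlocks_conjTranspose]; simp [hP.eq, hD.eq])
    (by rw [IsHermitian, fromBlocks_conjTranspose]; simp [hA.eq, hZ.eq])
    (by
      rw [fromBlocks_multiply, ← fromBlocks_one, fromBlocks_inj]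
      simp [smul_smul, hAZ.eq, hsq, add_comm (Z * Z)])
  refine le_trans (le_of_eq ?_) hbound
  rw [fromBlocks_multiply]
  simp only [mul_neg, neg_mul, neg_neg, Algebra.mul_smul_comm, Algebra.smul_mul_assoc, smul_smul,
    Complex.I_mul_I, neg_smul, one_smul, smul_neg, trace_fromBlocks_eq_add, trace_add,
    Complex.add_re]
  ring

theorem two_mul_traceNorm_fromBlocks_le {P Q D : Matrix n n ℂ} (hP : P.IsHermitian)
    (hQ : Q.IsHermitian) (hD : 0 ≤ D) :
    2 * traceNorm (fromBlocks P (Complex.I • D) (-(Complex.I • D)) Q) ≤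
      traceNorm (fromBlocks P (Complex.I • D) (-(Complex.I • D)) (-P)) +
        traceNorm (fromBlocks (-Q) (Complex.I • D) (-(Complex.I • D)) Q) := by
  have hDh := hD.posSemidef.isHermitian
  obtain ⟨U, hU, hU2, hUtr⟩ := exists_trace_mul_eq_traceNorm
    (K := fromBlocks P (Complex.I • D) (-(Complex.I • D)) Q)
    (by rw [IsHermitian, fromBlocks_conjTranspose]; simp [hP.eq, hQ.eq, hDh.eq])
  obtain ⟨A, B, B', C, rfl⟩ : ∃ A B B' C, U = fromBlocks A B B' C :=
    ⟨_, _, _, _, (fromBlocks_toBlocks U).symm⟩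
  obtain ⟨hA, -, rfl, hC⟩ := fromBlocks_inj.1 ((fromBlocks_conjTranspose A B B' C).symm.trans hU)
  rw [fromBlocks_multiply, ← fromBlocks_one, fromBlocks_inj] at hU2
  obtain ⟨hAB, -, -, hBC⟩ := hU2
  have hAcomm : Commute A (CFC.abs Bᴴ) := by
    refine (Commute.cfcₙ_nnreal ?_ _).symm
    rw [star_eq_conjTranspose, conjTranspose_conjTranspose, eq_sub_of_add_eq' hAB]
    exact (Commute.one_left A).sub_left ((Commute.refl A).mul_left (Commute.refl A))
  have hCcomm : Commute C (CFC.abs B) := by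
    refine (Commute.cfcₙ_nnreal ?_ _).symm
    rw [star_eq_conjTranspose, eq_sub_of_add_eq hBC]
    exact (Commute.one_left C).sub_left ((Commute.refl C).mul_left (Commute.refl C))
  have hboundP := re_trace_add_le_traceNorm_fromBlocks hP hDh hA
    (CFC.abs_nonneg Bᴴ).posSemidef.isHermitian hAcomm
    (by rw [CFC.abs_mul_abs, star_eq_conjTranspose, conjTranspose_conjTranspose, hAB])
  have hboundQ := re_trace_add_le_traceNorm_fromBlocks hQ.neg hDh (IsHermitian.neg hC)
    (CFC.abs_nonneg B).posSemidef.isHermitian hCcomm.neg_left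
    (by rw [CFC.abs_mul_abs, star_eq_conjTranspose, neg_mul_neg, add_comm, hBC])
  have hcross := re_trace_mul_nonneg (abs_conjTranspose_add_abs_nonneg B) hD
  rw [fromBlocks_multiply] at hUtr
  simp only [trace_fromBlocks_eq_add, trace_add, trace_sub, trace_neg, trace_smul, smul_eq_mul,
    Complex.add_re, Complex.sub_re, Complex.sub_im, Complex.neg_re, Complex.mul_re, Complex.I_re,
    Complex.I_im, zero_mul, one_mul, zero_sub, neg_sub, neg_neg, mul_neg, neg_mul, Matrix.add_mul,
    Matrix.sub_mul, Algebra.mul_smul_comm, Algebra.smul_mul_assoc] at hUtr hcross hboundP hboundQ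
  linarith

end TraceNorm

section Clifford

variable {A : Type*} [Ring A] {ι κ : Type*}

/-- The members `g i`, `i ∈ s`, of a family square to one and anticommute pairwise. The set `s`
allows families indexed by all of `ℕ` that satisfy the relations only below a bound. -/
structure IsCliffordOn (g : ι → A) (s : Set ι) : Prop where
  mul_self : ∀ i ∈ s, g i * g i = 1
  antiCommute : s.Pairwise fun i j => AntiCommute (g i) (g j)

lemma IsCliffordOn.comp {g : ι → A} {s : Set ι} (hg : IsCliffordOn g s) {f : κ → ι} {t : Set κ}
    (hmaps : Set.MapsTo f t s) (hinj : Set.InjOn f t) : IsCliffordOn (g ∘ f) t where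
  mul_self _ hi := hg.mul_self _ (hmaps hi)
  antiCommute _ hi _ hj hij := hg.antiCommute (hmaps hi) (hmaps hj) (hinj.ne hi hj hij)

lemma IsCliffordOn.smul [Algebra ℂ A] {g : ι → A} {s : Set ι} (hg : IsCliffordOn g s) {x : ι → ℂ}
    (hx : ∀ i ∈ s, x i * x i = 1) : IsCliffordOn (fun i => x i • g i) s where
  mul_self i hi := by rw [smul_mul_smul_comm, hx i hi, hg.mul_self i hi, one_smul]
  antiCommute i hi j hj hij := by
    change x i • g i * x j • g j = -(x j • g j * x i • g i)
    rw [smul_mul_smul_comm, smul_mul_smul_comm, hg.antiCommute hi hj hij, smul_neg, mul_comm (x i)]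

end Clifford

section Quadratic

open Matrix

variable {A : Type*} [Ring A] [Algebra ℂ A] {n : Type*} [Fintype n]

/-- The quadratic operator `½ ∑ K_{jk} c_j c_k` in the operators `c`, as a linear function of its
coefficient matrix `K`. -/
def quadOp (c : n → A) : Matrix n n ℂ →ₗ[ℂ] A where
  toFun K := (1 / 2 : ℂ) • ∑ j, ∑ k, K j k • (c j * c k)
  map_add' K K' := by simp [add_smul, Finset.sum_add_distrib]
  map_smul' r K := by
    simp only [Matrix.smul_apply, smul_eq_mul, mul_smul, ← Finset.smul_sum, RingHom.id_apply]
    rw [smul_comm]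

lemma quadOp_apply (c : n → A) (K : Matrix n n ℂ) :
    quadOp c K = (1 / 2 : ℂ) • ∑ j, ∑ k, K j k • (c j * c k) := rfl

lemma quadOp_vecMulVec (c : n → A) (w w' : n → ℂ) :
    quadOp c (vecMulVec w w') =
      (1 / 2 : ℂ) • (Fintype.linearCombination ℂ c w * Fintype.linearCombination ℂ c w') := by
  simp only [quadOp_apply, Fintype.linearCombination_apply, Finset.sum_mul_sum, vecMulVec_apply,
    smul_mul_smul_comm]

lemma IsCliffordOn.mul_linearCombination {c : n → A} (hc : IsCliffordOn c Set.univ) (i : n)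
    (w : n → ℂ) : c i * Fintype.linearCombination ℂ c w =
      (2 * w i) • (1 : A) - Fintype.linearCombination ℂ c w * c i := by
  have hterm : ∀ j, w j • (c i * c j) + w j • (c j * c i) =
      if i = j then (2 * w j) • (1 : A) else 0 := by
    intro j
    split_ifs with hij
    · rw [hij, hc.mul_self j trivial]; module
    · rw [hc.antiCommute trivial trivial hij]; module
  rw [eq_sub_iff_add_eq, Fintype.linearCombination_apply, Finset.mul_sum, Finset.sum_mul,
    ← Finset.sum_add_distrib]
  simp only [mul_smul_comm, smul_mul_assoc, hterm, Finset.sum_ite_eq, Finset.mem_univ, if_true]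

lemma IsCliffordOn.linearCombination_mul {c : n → A} (hc : IsCliffordOn c Set.univ)
    (w w' : n → ℂ) :
    Fintype.linearCombination ℂ c w * Fintype.linearCombination ℂ c w' =
      (2 * (w ⬝ᵥ w')) • (1 : A) -
        Fintype.linearCombination ℂ c w' * Fintype.linearCombination ℂ c w := by
  conv_lhs => rw [Fintype.linearCombination_apply, Finset.sum_mul]
  simp only [smul_mul_assoc, hc.mul_linearCombination, smul_sub, Finset.sum_sub_distrib, smul_smul]
  congr 1
  · rw [← Finset.sum_smul, dotProduct, Finset.mul_sum]
    congr 1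
    exact Finset.sum_congr rfl fun i _ => by ring
  · conv_rhs => rw [Fintype.linearCombination_apply ℂ c w, Finset.mul_sum]
    simp only [mul_smul_comm]

lemma IsCliffordOn.quadOp_mul_linearCombination {c : n → A} (hc : IsCliffordOn c Set.univ)
    {K : Matrix n n ℂ} (hK : Kᵀ = -K) (w : n → ℂ) :
    quadOp c K * Fintype.linearCombination ℂ c w =
      Fintype.linearCombination ℂ c w * quadOp c K +
        (2 : ℂ) • Fintype.linearCombination ℂ c (K *ᵥ w) := by
  set F := Fintype.linearCombination ℂ c w
  have hterm : ∀ j k, c j * c k * F = F * (c j * c k) + (2 * w k) • c j - (2 * w j) • c k := by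
    intro j k
    rw [mul_assoc, hc.mul_linearCombination, mul_sub, ← mul_assoc, hc.mul_linearCombination,
      sub_mul, mul_assoc]
    simp only [mul_smul_comm, smul_mul_assoc, mul_one, one_mul]
    abel
  have hleft : ∑ j, ∑ k, K j k • (2 * w k) • c j =
      (2 : ℂ) • Fintype.linearCombination ℂ c (K *ᵥ w) := by
    simp only [Fintype.linearCombination_apply, Finset.smul_sum, mulVec, dotProduct,
      Finset.sum_smul, smul_smul]
    exact Finset.sum_congr rfl fun j _ => Finset.sum_congr rfl fun k _ => by congr 1; ring
  have hright : ∑ j, ∑ k, K j k • (2 * w j) • c k =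
      -((2 : ℂ) • Fintype.linearCombination ℂ c (K *ᵥ w)) := by
    rw [Finset.sum_comm, ← hleft]
    simp only [← Finset.sum_neg_distrib]
    refine Finset.sum_congr rfl fun j _ => Finset.sum_congr rfl fun k _ => ?_
    rw [← transpose_apply K j k, hK, neg_apply, neg_smul]
  simp only [quadOp_apply, smul_mul_assoc, Finset.sum_mul, hterm, smul_sub, smul_add,
    Finset.sum_sub_distrib, Finset.sum_add_distrib, hleft, hright, mul_smul_comm, Finset.mul_sum]
  module

end Quadratic

section GroundEnergy

open Matrix

variable {V : Type*} [AddCommGroup V] [Module ℂ V]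

/-- The real eigenvalues of `H` that have an eigenvector in the subspace `S`. -/
def eigenvaluesIn (H : Module.End ℂ V) (S : Submodule ℂ V) : Set ℝ :=
  {t | ∃ ψ ∈ S, H.HasEigenvector (t : ℂ) ψ}

variable {n : Type*} [Fintype n]

lemma eq_sum_eigenvalues_smul_vecMulVec [DecidableEq n] {K : Matrix n n ℂ} (hK : K.IsHermitian) :
    K = ∑ m, (hK.eigenvalues m : ℂ) •
      vecMulVec (hK.eigenvectorBasis m : n → ℂ) (star (hK.eigenvectorBasis m : n → ℂ)) := by
  ext i j
  conv_lhs => rw [hK.spectral_theorem, Unitary.conjStarAlgAut_apply]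
  rw [Matrix.mul_apply, Matrix.sum_apply]
  simp only [mul_diagonal, star_apply, hK.eigenvectorUnitary_apply, Function.comp_apply,
    Matrix.smul_apply, vecMulVec_apply, smul_eq_mul, Pi.star_apply]
  exact Finset.sum_congr rfl fun m _ => by
    simp only [Complex.coe_algebraMap, RCLike.star_def]; ring

lemma mulVec_star_of_transpose_eq_neg {K : Matrix n n ℂ} (hK : K.IsHermitian) (hKt : Kᵀ = -K)
    (w : n → ℂ) : K *ᵥ star w = -star (K *ᵥ w) := by
  rw [star_mulVec, hK.eq, ← mulVec_transpose, hKt, neg_mulVec, neg_neg]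

/-- A mode `w` of negative frequency annihilates the lowest eigenvectors, as it lowers the
energy. -/
lemma IsCliffordOn.linearCombination_apply_eq_zero {c : n → Module.End ℂ V}
    (hc : IsCliffordOn c Set.univ) {K : Matrix n n ℂ} (hKt : Kᵀ = -K) {S : Submodule ℂ V}
    (hS : ∀ j, ∀ ψ ∈ S, c j ψ ∈ S) {E : ℝ} (hE : E ∈ lowerBounds (eigenvaluesIn (quadOp c K) S))
    {ψ : V} (hψS : ψ ∈ S) (hψ : quadOp c K ψ = (E : ℂ) • ψ) {w : n → ℂ} {r : ℝ} (hr : r < 0)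
    (hw : K *ᵥ w = (r : ℂ) • w) : Fintype.linearCombination ℂ c w ψ = 0 := by
  by_contra hne
  have hcomm := congrArg (fun f : Module.End ℂ V => f ψ) (hc.quadOp_mul_linearCombination hKt w)
  simp only [Module.End.mul_apply, LinearMap.add_apply, LinearMap.smul_apply, hw, map_smul, hψ]
    at hcomm
  have hmem : E + 2 * r ∈ eigenvaluesIn (quadOp c K) S := by
    refine ⟨Fintype.linearCombination ℂ c w ψ, ?_, Module.End.mem_eigenspace_iff.2 ?_, hne⟩
    · rw [Fintype.linearCombination_apply, LinearMap.sum_apply]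
      exact S.sum_mem fun j _ => S.smul_mem _ (hS j ψ hψS)
    · rw [hcomm]; push_cast; module
  linarith [hE hmem]

lemma IsCliffordOn.smul_linearCombination_apply {c : n → Module.End ℂ V}
    (hc : IsCliffordOn c Set.univ) {K : Matrix n n ℂ} (hK : K.IsHermitian) (hKt : Kᵀ = -K)
    {S : Submodule ℂ V} (hS : ∀ j, ∀ ψ ∈ S, c j ψ ∈ S) {E : ℝ}
    (hE : E ∈ lowerBounds (eigenvaluesIn (quadOp c K) S)) {ψ : V} (hψS : ψ ∈ S)
    (hψ : quadOp c K ψ = (E : ℂ) • ψ) {w : n → ℂ} (hnorm : w ⬝ᵥ star w = 1) {r : ℝ}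
    (hw : K *ᵥ w = (r : ℂ) • w) :
    (r : ℂ) • Fintype.linearCombination ℂ c w (Fintype.linearCombination ℂ c (star w) ψ) =
      ((r - |r| : ℝ) : ℂ) • ψ := by
  rcases lt_trichotomy r 0 with hr | rfl | hr
  · have hkill := hc.linearCombination_apply_eq_zero hKt hS hE hψS hψ hr hw
    have hanti := congrArg (fun f : Module.End ℂ V => f ψ) (hc.linearCombination_mul w (star w))
    simp only [Module.End.mul_apply, LinearMap.sub_apply, hkill, map_zero, hnorm, sub_zero,
      LinearMap.smul_apply, Module.End.one_apply] at hanti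
    rw [hanti, abs_of_neg hr]
    push_cast
    module
  · simp
  · have hw' : K *ᵥ star w = ((-r : ℝ) : ℂ) • star w := by
      rw [mulVec_star_of_transpose_eq_neg hK hKt, hw]; simp
    rw [hc.linearCombination_apply_eq_zero hKt hS hE hψS hψ (neg_lt_zero.2 hr) hw',
      abs_of_pos hr, sub_self]
    simp

theorem IsCliffordOn.eq_neg_traceNorm_div_two [DecidableEq n] {c : n → Module.End ℂ V}
    (hc : IsCliffordOn c Set.univ) {K : Matrix n n ℂ} (hK : K.IsHermitian) (hKt : Kᵀ = -K)
    {S : Submodule ℂ V} (hS : ∀ j, ∀ ψ ∈ S, c j ψ ∈ S) {E : ℝ}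
    (hE : IsLeast (eigenvaluesIn (quadOp c K) S) E) : E = -traceNorm K / 2 := by
  obtain ⟨⟨ψ, hψS, hψE, hψ0⟩, hmin⟩ := hE
  rw [Module.End.mem_eigenspace_iff] at hψE
  let v : n → n → ℂ := fun m => hK.eigenvectorBasis m
  have hv : ∀ m, K *ᵥ v m = (hK.eigenvalues m : ℂ) • v m := fun m => by
    simpa using hK.mulVec_eigenvectorBasis m
  have hnorm : ∀ m, v m ⬝ᵥ star (v m) = 1 := fun m => by
    rw [← EuclideanSpace.inner_eq_star_dotProduct]
    exact inner_self_eq_one_of_norm_eq_one (𝕜 := ℂ) (hK.eigenvectorBasis.norm_eq_one m)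
  have htrace : ∑ m, hK.eigenvalues m = 0 := by
    have hdiag : K.trace = 0 := self_eq_neg.1 (by
      conv_lhs => rw [← trace_transpose, hKt, trace_neg])
    rw [hK.trace_eq_sum_eigenvalues] at hdiag
    exact Complex.ofReal_injective (by push_cast; exact hdiag)
  have hsum : ((∑ m, (hK.eigenvalues m - |hK.eigenvalues m|) / 2 : ℝ) : ℂ) • ψ = (E : ℂ) • ψ := by
    rw [← hψE]
    conv_rhs => rw [eq_sum_eigenvalues_smul_vecMulVec hK]
    simp only [map_sum, map_smul, quadOp_vecMulVec, LinearMap.sum_apply, LinearMap.smul_apply,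
      Module.End.mul_apply]
    rw [Complex.ofReal_sum, Finset.sum_smul]
    refine Finset.sum_congr rfl fun m _ => ?_
    rw [smul_comm, hc.smul_linearCombination_apply hK hKt hS hmin hψS hψE (hnorm m) (hv m),
      smul_smul]
    push_cast
    congr 1; ring
  have hEsum := Complex.ofReal_injective (smul_left_injective ℂ hψ0 hsum)
  rw [← hEsum, traceNorm_eq_sum_abs_eigenvalues hK, ← Finset.sum_div, Finset.sum_sub_distrib,
    htrace, zero_sub]

end GroundEnergy

section Involutions

variable {R M α : Type*} [CommRing R] [AddCommGroup M] [Module R M]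

lemma exists_apply_eq_units_smul {u : Module.End R M} (hu : u * u = 1) {W : Submodule R M}
    (huW : ∀ φ ∈ W, u φ ∈ W) (hW : W ≠ ⊥) : ∃ ε : ℤˣ, ∃ φ ∈ W, φ ≠ 0 ∧ u φ = ε • φ := by
  obtain ⟨φ, hφ, hφ0⟩ := W.ne_bot_iff.1 hW
  have huφ : u (u φ) = φ := by rw [← Module.End.mul_apply, hu, Module.End.one_apply]
  by_cases hsum : φ + u φ = 0
  · exact ⟨-1, φ, hφ, hφ0, by rw [eq_neg_of_add_eq_zero_right hsum, Units.neg_smul, one_smul]⟩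
  · exact ⟨1, φ + u φ, W.add_mem hφ (huW φ hφ), hsum, by
      rw [map_add, huφ, one_smul, add_comm]⟩

lemma exists_apply_eq_units_smul_of_antiCommute {u f : Module.End R M} (hu : u * u = 1)
    (hf : f * f = 1) (huf : AntiCommute u f) {W : Submodule R M} (huW : ∀ φ ∈ W, u φ ∈ W)
    (hfW : ∀ φ ∈ W, f φ ∈ W) (hW : W ≠ ⊥) (ε : ℤˣ) : ∃ φ ∈ W, φ ≠ 0 ∧ u φ = ε • φ := by
  obtain ⟨ε', φ, hφ, hφ0, huφ⟩ := exists_apply_eq_units_smul hu huW hW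
  rcases eq_or_ne ε' ε with rfl | hne
  · exact ⟨φ, hφ, hφ0, huφ⟩
  obtain rfl := Int.units_ne_iff_eq_neg.1 hne
  refine ⟨f φ, hfW φ hφ, fun h => hφ0 ?_, ?_⟩
  · rw [← Module.End.one_apply (R := R) φ, ← hf, Module.End.mul_apply, h, map_zero]
  · rw [← Module.End.mul_apply, huf, LinearMap.neg_apply, Module.End.mul_apply, huφ,
      Units.neg_smul, map_neg, neg_neg, Units.smul_def, map_zsmul, Units.smul_def]

lemma exists_forall_apply_eq_units_smul {u : α → Module.End R M} {l : List α}
    (hu : ∀ e ∈ l, u e * u e = 1) (hcomm : ∀ e ∈ l, ∀ e' ∈ l, Commute (u e) (u e'))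
    {W : Submodule R M} (huW : ∀ e ∈ l, ∀ φ ∈ W, u e φ ∈ W) (hW : W ≠ ⊥) :
    ∃ ε : α → ℤˣ, ∃ φ ∈ W, φ ≠ 0 ∧ ∀ e ∈ l, u e φ = ε e • φ := by
  suffices ∃ φ ∈ W, φ ≠ 0 ∧ ∀ e ∈ l, ∃ ε : ℤˣ, u e φ = ε • φ by
    obtain ⟨φ, hφ, hφ0, hε⟩ := this
    choose! ε hε using hε
    exact ⟨ε, φ, hφ, hφ0, hε⟩
  induction l generalizing W with
  | nil => simpa using W.ne_bot_iff.1 hW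
  | cons e l ih =>
    simp only [List.forall_mem_cons] at hu hcomm huW ⊢
    obtain ⟨ε, φ, hφ, hφ0, huφ⟩ := exists_apply_eq_units_smul hu.1 huW.1 hW
    have hinv : ∀ e' ∈ l, ∀ φ ∈ W ⊓ (u e).eigenspace ((ε : ℤ) : R),
        u e' φ ∈ W ⊓ (u e).eigenspace ((ε : ℤ) : R) := fun e' he' φ hφ =>
      ⟨huW.2 e' he' φ hφ.1,
        Module.End.mapsTo_genEigenspace_of_comm (hcomm.1.2 e' he') _ 1 hφ.2⟩
    obtain ⟨φ', ⟨hφ', hφ'e⟩, hφ'0, hε⟩ := ih hu.2 (fun e he e' he' => (hcomm.2 e he).2 e' he')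
      hinv ((Submodule.ne_bot_iff _).2 ⟨φ, ⟨hφ, Module.End.mem_eigenspace_iff.2 (by
        rw [huφ, Units.smul_def, Int.cast_smul_eq_zsmul])⟩, hφ0⟩)
    refine ⟨φ', hφ', hφ'0, ⟨ε, ?_⟩, hε⟩
    rw [Module.End.mem_eigenspace_iff.1 hφ'e, Units.smul_def, Int.cast_smul_eq_zsmul]

/-- Prescribed signs are reached one at a time: `f e` flips the sign of `u e` and of no other. -/
lemma exists_forall_apply_eq_units_smul_of_antiCommute [Nontrivial M] {u f : α → Module.End R M}
    {l : List α} (hl : l.Nodup) (hu : ∀ e ∈ l, u e * u e = 1)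
    (hcomm : ∀ e ∈ l, ∀ e' ∈ l, Commute (u e) (u e')) (hf : ∀ e ∈ l, f e * f e = 1)
    (hanti : ∀ e ∈ l, AntiCommute (u e) (f e))
    (hcommf : ∀ e ∈ l, ∀ e' ∈ l, e ≠ e' → Commute (u e) (f e')) (ε : α → ℤˣ) :
    ∃ φ : M, φ ≠ 0 ∧ ∀ e ∈ l, u e φ = ε e • φ := by
  induction l with
  | nil => simpa using exists_ne (0 : M)
  | cons e l ih =>
    obtain ⟨hel, hl⟩ := List.nodup_cons.1 hl
    simp only [List.forall_mem_cons] at hu hcomm hf hanti hcommf ⊢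
    let W : Submodule R M := ⨅ e' ∈ l, (u e').eigenspace ((ε e' : ℤ) : R)
    have hW : ∀ φ, φ ∈ W ↔ ∀ e' ∈ l, u e' φ = ε e' • φ := fun φ => by
      simp only [W, Submodule.mem_iInf, Module.End.mem_eigenspace_iff, Units.smul_def,
        Int.cast_smul_eq_zsmul]
    have hinv : ∀ g : Module.End R M, (∀ e' ∈ l, Commute (u e') g) → ∀ φ ∈ W, g φ ∈ W :=
      fun g hg φ hφ => (hW _).2 fun e' he' => by
        rw [← Module.End.mul_apply, (hg e' he').eq, Module.End.mul_apply, (hW φ).1 hφ e' he']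
        simp only [Units.smul_def, map_zsmul]
    obtain ⟨φ, hφ0, hφ⟩ := ih hl hu.2 (fun e he e' he' => (hcomm.2 e he).2 e' he') hf.2 hanti.2
      fun e he e' he' => (hcommf.2 e he).2 e' he'
    obtain ⟨φ', hφ', hφ'0, hφ'e⟩ := exists_apply_eq_units_smul_of_antiCommute hu.1 hf.1 hanti.1
      (hinv _ fun e' he' => (hcomm.2 e' he').1)
      (hinv _ fun e' he' => (hcommf.2 e' he').1 fun h => hel (h ▸ he'))
      ((Submodule.ne_bot_iff _).2 ⟨φ, (hW φ).2 hφ, hφ0⟩) (ε e)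
    exact ⟨φ', hφ'0, hφ'e, (hW φ').1 hφ'⟩

end Involutions

section Pairs

variable {A : Type*} [Ring A] [Algebra ℂ A] {ι : Type*}

/-- The parity `i gᵢ gⱼ` of the fermion mode made of two Majorana operators. Bond operators
`u_{ij}` and hopping terms `i cᵢ cⱼ` are both of this form. -/
def pairParity (g : ι → A) (i j : ι) : A :=
  Complex.I • (g i * g j)

namespace IsCliffordOn

variable {g : ι → A} {s : Set ι} {i j k : ι}

lemma pairParity_swap (hg : IsCliffordOn g s) (hi : i ∈ s) (hj : j ∈ s) (hij : i ≠ j) :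
    pairParity g j i = -pairParity g i j := by
  rw [pairParity, pairParity, hg.antiCommute hi hj hij, smul_neg, neg_neg]

lemma commute_pairParity (hg : IsCliffordOn g s) (hi : i ∈ s) (hj : j ∈ s) (hk : k ∈ s)
    (hik : i ≠ k) (hjk : j ≠ k) : Commute (pairParity g i j) (g k) := by
  refine Commute.smul_left ?_ _
  rw [Commute, SemiconjBy, mul_assoc, hg.antiCommute hj hk hjk, mul_neg, ← mul_assoc,
    hg.antiCommute hi hk hik, neg_mul, neg_neg, mul_assoc]

lemma antiCommute_pairParity (hg : IsCliffordOn g s) (hi : i ∈ s) (hj : j ∈ s) (hij : i ≠ j) :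
    AntiCommute (pairParity g i j) (g i) := by
  rw [AntiCommute, pairParity, smul_mul_assoc, mul_smul_comm, mul_assoc,
    hg.antiCommute hj hi hij.symm, mul_neg, smul_neg]

lemma pairParity_mul_self (hg : IsCliffordOn g s) (hi : i ∈ s) (hj : j ∈ s) (hij : i ≠ j) :
    pairParity g i j * pairParity g i j = 1 := by
  have hsq : g i * g j * (g j * g i) = 1 := by
    rw [mul_assoc, ← mul_assoc (g j), hg.mul_self j hj, one_mul, hg.mul_self i hi]
  rw [pairParity, smul_mul_smul_comm, Complex.I_mul_I]
  nth_rw 2 [hg.antiCommute hi hj hij]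
  rw [mul_neg, hsq, neg_smul_neg, one_smul]

lemma isSelfAdjoint_pairParity [StarRing A] [StarModule ℂ A] (hg : IsCliffordOn g s) (hi : i ∈ s)
    (hj : j ∈ s) (hij : i ≠ j) (hgi : IsSelfAdjoint (g i)) (hgj : IsSelfAdjoint (g j)) :
    IsSelfAdjoint (pairParity g i j) := by
  rw [IsSelfAdjoint, pairParity, star_smul, star_mul, hgi.star_eq, hgj.star_eq,
    hg.antiCommute hj hi hij.symm, Complex.star_def, Complex.conj_I, neg_smul_neg]

end IsCliffordOn

lemma commute_pairParity_of_commute {x : A} {g : ι → A} {i j : ι} (hi : Commute x (g i))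
    (hj : Commute x (g j)) : Commute x (pairParity g i j) :=
  (hi.mul_right hj).smul_right _

end Pairs

section ColoredGraphs

/-- The undirected edges underlying a list of bonds. -/
def edges (bonds : List (ℕ × ℕ × BondType)) : List (Sym2 ℕ) :=
  bonds.map fun e => s(e.1, e.2.1)

/-- The bonds form a simple graph on `{0, …, n - 1}` and their types a proper edge colouring. This
is all that the argument uses about the ladder. -/
structure IsColoredGraph (n : ℕ) (bonds : List (ℕ × ℕ × BondType)) : Prop where
  lt : ∀ e ∈ bonds, e.1 < n ∧ e.2.1 < n
  ne : ∀ e ∈ bonds, e.1 ≠ e.2.1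
  nodup : (edges bonds).Nodup
  eq_of_mem : ∀ e ∈ bonds, ∀ e' ∈ bonds, e.2.2 = e'.2.2 →
    ∀ v ∈ s(e.1, e.2.1), v ∈ s(e'.1, e'.2.1) → e = e'

lemma IsColoredGraph.of_sublist {n : ℕ} {bonds bonds' : List (ℕ × ℕ × BondType)}
    (h : IsColoredGraph n bonds) (hsub : bonds'.Sublist bonds) : IsColoredGraph n bonds' where
  lt e he := h.lt e (hsub.subset he)
  ne e he := h.ne e (hsub.subset he)
  nodup := h.nodup.sublist (hsub.map _)
  eq_of_mem e he e' he' := h.eq_of_mem e (hsub.subset he) e' (hsub.subset he')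

/-- The bonds `(i, j)` of each type of the closed ladder, by arithmetic conditions. -/
def IsClosedBond (N i j : ℕ) : BondType → Prop
  | .z => i % 2 = 0 ∧ i < 4 * N ∧ j = i + 1
  | .x => (i % 2 = 1 ∧ j < 4 * N ∧ j = i + 1) ∨ (i = 4 * N - 1 ∧ j = 0)
  | .y => (i % 2 = 0 ∧ j < 4 * N ∧ j = i + 3) ∨ (i = 4 * N - 2 ∧ j = 1)

lemma isClosedBond_of_mem {N : ℕ} {e : ℕ × ℕ × BondType} (he : e ∈ closedBonds N) :
    IsClosedBond N e.1 e.2.1 e.2.2 := by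
  simp only [closedBonds, openBonds, List.mem_append, List.mem_map, List.mem_range,
    List.mem_cons, List.not_mem_nil, or_false] at he
  rcases he with ((⟨k, h, rfl⟩ | ⟨k, h, rfl⟩) | ⟨k, h, rfl⟩) | rfl | rfl
  all_goals dsimp only [IsClosedBond]; omega

lemma nodup_closedBonds (N : ℕ) : (closedBonds N).Nodup := by
  have hrange : ∀ (m : ℕ) (f : ℕ → ℕ × ℕ × BondType), (∀ j k, f j = f k → j = k) →
      ((List.range m).map f).Nodup := fun m f hf => List.nodup_range.map fun j k => hf j k
  simp only [closedBonds, openBonds, List.nodup_append, List.mem_append, List.mem_map,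
    List.mem_range, List.mem_cons, List.not_mem_nil, or_false]
  refine ⟨⟨⟨hrange _ _ ?_, hrange _ _ ?_, ?_⟩, hrange _ _ ?_, ?_⟩, ?_, ?_⟩ <;> grind

lemma isColoredGraph_closedBonds {N : ℕ} (hN : 2 ≤ N) : IsColoredGraph (4 * N) (closedBonds N) where
  lt e he := by
    have h := isClosedBond_of_mem he
    rcases e with ⟨i, j, _ | _ | _⟩ <;> simp only [IsClosedBond] at h ⊢ <;> omega
  ne e he := by
    have h := isClosedBond_of_mem he
    rcases e with ⟨i, j, _ | _ | _⟩ <;> simp only [IsClosedBond] at h ⊢ <;> omega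
  nodup := by
    refine (nodup_closedBonds N).map_on fun e he e' he' hee' => ?_
    have h := isClosedBond_of_mem he
    have h' := isClosedBond_of_mem he'
    rcases e with ⟨i, j, _ | _ | _⟩ <;> rcases e' with ⟨i', j', _ | _ | _⟩ <;>
      simp only [IsClosedBond, Sym2.eq_iff, Prod.mk.injEq, reduceCtorEq, and_true, and_false]
        at h h' hee' ⊢ <;> omega
  eq_of_mem e he e' he' htype v hv hv' := by
    have h := isClosedBond_of_mem he
    have h' := isClosedBond_of_mem he'
    rcases e with ⟨i, j, _ | _ | _⟩ <;> rcases e' with ⟨i', j', _ | _ | _⟩ <;>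
      simp only [IsClosedBond, Sym2.mem_iff, Prod.mk.injEq, reduceCtorEq, and_true]
        at h h' htype hv hv' ⊢ <;> omega

lemma isColoredGraph_of_ladder {N : ℕ} (hN : 2 ≤ N) {bonds : List (ℕ × ℕ × BondType)}
    (hbonds : bonds = openBonds N ∨ bonds = closedBonds N) : IsColoredGraph (4 * N) bonds := by
  rcases hbonds with rfl | rfl
  · exact (isColoredGraph_closedBonds hN).of_sublist (List.sublist_append_left _ _)
  · exact isColoredGraph_closedBonds hN

end ColoredGraphs

section SignedCouplings

variable {n : ℕ} {bonds : List (ℕ × ℕ × BondType)} {J : ℕ × ℕ → ℝ}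

lemma mem_edges_iff {i j : ℕ} :
    s(i, j) ∈ edges bonds ↔ ∃ e ∈ bonds, (e.1, e.2.1) = (i, j) ∨ (e.1, e.2.1) = (j, i) := by
  simp only [edges, List.mem_map, Sym2.eq_iff, Prod.mk.injEq]

lemma mem_edges_of_mem {e : ℕ × ℕ × BondType} (he : e ∈ bonds) : s(e.1, e.2.1) ∈ edges bonds :=
  List.mem_map_of_mem he

/-- A choice of values `±1` of all bond operators, encoded by the effective couplings
`a i j = J_{(ij)} u_{ij}`, antisymmetric and supported on the bonds. -/
structure IsSignedCoupling (bonds : List (ℕ × ℕ × BondType)) (J : ℕ × ℕ → ℝ) (a : ℕ → ℕ → ℝ) :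
    Prop where
  anti : ∀ i j, a j i = -a i j
  abs_eq : ∀ i j, s(i, j) ∈ edges bonds → |a i j| = |J (i, j)|
  eq_zero : ∀ i j, s(i, j) ∉ edges bonds → a i j = 0

lemma IsColoredGraph.exists_isSignedCoupling (hb : IsColoredGraph n bonds)
    (hJ : ∀ i j, J (i, j) = J (j, i)) {x : ℕ × ℕ × BondType → ℝ}
    (hx : ∀ e ∈ bonds, |x e| = |J (e.1, e.2.1)|) :
    ∃ a, IsSignedCoupling bonds J a ∧ ∀ e ∈ bonds, a e.1 e.2.1 = x e := by
  let ends : {e // e ∈ bonds} → ℕ × ℕ := fun e => (e.1.1, e.1.2.1)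
  let p : ℕ × ℕ → ℝ := Function.extend ends (fun e => x e) 0
  have hedge : ∀ e ∈ bonds, ∀ e' ∈ bonds, s(e.1, e.2.1) = s(e'.1, e'.2.1) → e = e' :=
    fun e he e' he' h => List.inj_on_of_nodup_map hb.nodup he he' h
  have hends : Function.Injective ends := fun e e' h =>
    Subtype.ext (hedge e e.2 e' e'.2 (congrArg (fun q : ℕ × ℕ => s(q.1, q.2)) h))
  have hp : ∀ e ∈ bonds, p (e.1, e.2.1) = x e := fun e he => hends.extend_apply _ _ ⟨e, he⟩
  have hp_zero : ∀ q, (∀ e ∈ bonds, (e.1, e.2.1) ≠ q) → p q = 0 := fun q hq =>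
    Function.extend_apply' _ _ _ fun ⟨e, he⟩ => hq e e.2 he
  have hp_swap : ∀ e ∈ bonds, p (e.2.1, e.1) = 0 := fun e he => hp_zero _ fun e' he' h => by
    obtain rfl := hedge e' he' e he
      ((congrArg (fun q : ℕ × ℕ => s(q.1, q.2)) h).trans Sym2.eq_swap)
    exact hb.ne e' he' (Prod.mk.inj h).1
  have hval : ∀ e ∈ bonds, p (e.1, e.2.1) - p (e.2.1, e.1) = x e := fun e he => by
    rw [hp e he, hp_swap e he, sub_zero]
  refine ⟨fun i j => p (i, j) - p (j, i), ⟨fun i j => (neg_sub _ _).symm, fun i j hij => ?_,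
    fun i j hij => ?_⟩, hval⟩
  · obtain ⟨e, he, h | h⟩ := mem_edges_iff.1 hij <;> obtain ⟨rfl, rfl⟩ := Prod.mk.inj h
    · rw [hval e he, hx e he]
    · rw [abs_sub_comm, hval e he, hx e he, hJ]
  · rw [hp_zero, hp_zero, sub_zero]
    · exact fun e he h => hij (mem_edges_iff.2 ⟨e, he, Or.inr h⟩)
    · exact fun e he h => hij (mem_edges_iff.2 ⟨e, he, Or.inl h⟩)

lemma IsColoredGraph.sum_sum_eq_two_nsmul {M : Type*} [AddCommMonoid M]
    (hb : IsColoredGraph n bonds) {ι : Type*} [Fintype ι] {f : ι → ℕ} (hf : Function.Injective f)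
    (hrange : Set.range f = {k | k < n}) {G : ℕ → ℕ → M} (hsymm : ∀ i j, G i j = G j i)
    (hzero : ∀ i j, s(i, j) ∉ edges bonds → G i j = 0) :
    ∑ p, ∑ q, G (f p) (f q) = 2 • (bonds.map fun e => G e.1 e.2.1).sum := by
  let g : Sym2 ℕ → M := Sym2.lift ⟨G, hsymm⟩
  let pairs : Finset (ι × ι) := {pq | s(f pq.1, f pq.2) ∈ edges bonds}
  have hfiber : ∀ t ∈ (edges bonds).toFinset, ∑ pq ∈ pairs with s(f pq.1, f pq.2) = t,
      G (f pq.1) (f pq.2) = 2 • g t := by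
    intro t ht
    obtain ⟨e, he, rfl⟩ := List.mem_map.1 (List.mem_toFinset.1 ht)
    obtain ⟨p, hp⟩ : e.1 ∈ Set.range f := hrange ▸ (hb.lt e he).1
    obtain ⟨q, hq⟩ : e.2.1 ∈ Set.range f := hrange ▸ (hb.lt e he).2
    have hpq : (p, q) ≠ (q, p) := fun h => hb.ne e he (by rw [← hp, ← hq, (Prod.mk.inj h).1])
    have hset : {pq ∈ pairs | s(f pq.1, f pq.2) = s(e.1, e.2.1)} = {(p, q), (q, p)} := by
      ext ⟨p', q'⟩
      simp only [pairs, Finset.mem_filter, Finset.mem_univ, true_and, Finset.mem_insert,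
        Finset.mem_singleton, Prod.mk.injEq, ← hp, ← hq, Sym2.eq_iff, hf.eq_iff,
        and_iff_right_iff_imp]
      rintro (⟨rfl, rfl⟩ | ⟨rfl, rfl⟩)
      · rw [hp, hq]; exact mem_edges_of_mem he
      · rw [hp, hq, Sym2.eq_swap]; exact mem_edges_of_mem he
    rw [hset, Finset.sum_pair hpq, hsymm (f q), two_nsmul, hp, hq]
    rfl
  calc ∑ p, ∑ q, G (f p) (f q)
      = ∑ pq : ι × ι, G (f pq.1) (f pq.2) := (Fintype.sum_prod_type' fun p q => G (f p) (f q)).symm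
    _ = ∑ pq ∈ pairs, G (f pq.1) (f pq.2) := by
      exact (Finset.sum_filter_of_ne fun pq _ h => of_not_not fun hpq => h (hzero _ _ hpq)).symm
    _ = ∑ t ∈ (edges bonds).toFinset, 2 • g t := by
      refine (Finset.sum_fiberwise_of_maps_to (g := fun pq : ι × ι => s(f pq.1, f pq.2))
        (fun pq hpq => ?_) _).symm.trans (Finset.sum_congr rfl hfiber)
      exact List.mem_toFinset.2 (Finset.mem_filter.1 hpq).2
    _ = 2 • (bonds.map fun e => G e.1 e.2.1).sum := by
      rw [← Finset.smul_sum, List.sum_toFinset _ hb.nodup, edges, List.map_map]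
      rfl

end SignedCouplings

section BondOperators

variable {A : Type*} [Ring A] [Algebra ℂ A] {n : ℕ} {bonds : List (ℕ × ℕ × BondType)}
  {b : ℕ → BondType → A} {c : ℕ → A}

namespace IsColoredGraph

lemma commute_uOp_ladderGen (hb : IsColoredGraph n bonds)
    (hg : IsCliffordOn (ladderGen b c) {p | p.1 < n}) {e : ℕ × ℕ × BondType} (he : e ∈ bonds)
    {p : ℕ × Option BondType} (hp : p.1 < n)
    (hne : ∀ v ∈ s(e.1, e.2.1), (v, some e.2.2) ≠ p) : Commute (uOp b e) (ladderGen b c p) :=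
  hg.commute_pairParity (i := (e.1, some e.2.2)) (j := (e.2.1, some e.2.2)) (hb.lt e he).1
    (hb.lt e he).2 hp (hne _ (Sym2.mem_mk_left _ _)) (hne _ (Sym2.mem_mk_right _ _))

lemma commute_uOp_fermion (hb : IsColoredGraph n bonds)
    (hg : IsCliffordOn (ladderGen b c) {p | p.1 < n}) {e : ℕ × ℕ × BondType} (he : e ∈ bonds)
    {k : ℕ} (hk : k < n) : Commute (uOp b e) (c k) :=
  hb.commute_uOp_ladderGen hg he (p := (k, none)) hk fun _ _ h => by simp at h

lemma commute_uOp_bondMajorana (hb : IsColoredGraph n bonds)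
    (hg : IsCliffordOn (ladderGen b c) {p | p.1 < n}) {e e' : ℕ × ℕ × BondType} (he : e ∈ bonds)
    (he' : e' ∈ bonds) (hee' : e ≠ e') {k : ℕ} (hk : k ∈ s(e'.1, e'.2.1)) :
    Commute (uOp b e) (b k e'.2.2) := by
  have hkn : k < n := by
    rcases Sym2.mem_iff.1 hk with rfl | rfl
    · exact (hb.lt e' he').1
    · exact (hb.lt e' he').2
  refine hb.commute_uOp_ladderGen hg he (p := (k, some e'.2.2)) hkn fun v hv h => hee' ?_
  obtain ⟨rfl, htype⟩ := Prod.mk.inj h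
  exact hb.eq_of_mem e he e' he' (Option.some.inj htype) v hv hk

lemma commute_uOp_uOp (hb : IsColoredGraph n bonds)
    (hg : IsCliffordOn (ladderGen b c) {p | p.1 < n}) {e e' : ℕ × ℕ × BondType} (he : e ∈ bonds)
    (he' : e' ∈ bonds) : Commute (uOp b e) (uOp b e') := by
  rcases eq_or_ne e e' with rfl | hee'
  · exact Commute.refl _
  · exact ((hb.commute_uOp_bondMajorana hg he he' hee' (Sym2.mem_mk_left _ _)).mul_right
      (hb.commute_uOp_bondMajorana hg he he' hee' (Sym2.mem_mk_right _ _))).smul_right _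

lemma bondEnds_ne (hb : IsColoredGraph n bonds) {e : ℕ × ℕ × BondType} (he : e ∈ bonds)
    (o : Option BondType) : (e.1, o) ≠ (e.2.1, o) :=
  fun h => hb.ne e he (Prod.mk.inj h).1

lemma uOp_mul_self (hb : IsColoredGraph n bonds)
    (hg : IsCliffordOn (ladderGen b c) {p | p.1 < n}) {e : ℕ × ℕ × BondType} (he : e ∈ bonds) :
    uOp b e * uOp b e = 1 :=
  hg.pairParity_mul_self (hb.lt e he).1 (hb.lt e he).2 (hb.bondEnds_ne he (some e.2.2))

lemma uOp_swap (hb : IsColoredGraph n bonds)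
    (hg : IsCliffordOn (ladderGen b c) {p | p.1 < n}) {e : ℕ × ℕ × BondType} (he : e ∈ bonds) :
    uOp b (e.2.1, e.1, e.2.2) = -uOp b e :=
  hg.pairParity_swap (hb.lt e he).1 (hb.lt e he).2 (hb.bondEnds_ne he (some e.2.2))

lemma antiCommute_uOp_bondMajorana (hb : IsColoredGraph n bonds)
    (hg : IsCliffordOn (ladderGen b c) {p | p.1 < n}) {e : ℕ × ℕ × BondType} (he : e ∈ bonds) :
    AntiCommute (uOp b e) (b e.1 e.2.2) :=
  hg.antiCommute_pairParity (hb.lt e he).1 (hb.lt e he).2 (hb.bondEnds_ne he (some e.2.2))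

lemma commute_uOp_fermH (hb : IsColoredGraph n bonds)
    (hg : IsCliffordOn (ladderGen b c) {p | p.1 < n}) (J : ℕ × ℕ → ℝ) {e : ℕ × ℕ × BondType}
    (he : e ∈ bonds) : Commute (uOp b e) (fermH J b c bonds) := by
  refine Commute.list_sum_right _ _ (List.forall_mem_map.2 fun e' he' => ?_)
  have hc := (hb.commute_uOp_fermion hg he (hb.lt e' he').1).mul_right
    (hb.commute_uOp_fermion hg he (hb.lt e' he').2)
  exact ((hb.commute_uOp_uOp hg he he').mul_right (hc.smul_right _)).smul_right _

lemma isSelfAdjoint_fermH [StarRing A] [StarModule ℂ A] (hb : IsColoredGraph n bonds)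
    (hg : IsCliffordOn (ladderGen b c) {p | p.1 < n})
    (hsa : ∀ p : ℕ × Option BondType, p.1 < n → IsSelfAdjoint (ladderGen b c p))
    (J : ℕ × ℕ → ℝ) : IsSelfAdjoint (fermH J b c bonds) := by
  refine list_sum_mem (S := selfAdjoint A) (List.forall_mem_map.2 fun e he => ?_)
  obtain ⟨hi, hj⟩ := hb.lt e he
  have hpair : ∀ o, IsSelfAdjoint (pairParity (ladderGen b c) (e.1, o) (e.2.1, o)) := fun o =>
    hg.isSelfAdjoint_pairParity hi hj (hb.bondEnds_ne he o) (hsa _ hi) (hsa _ hj)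
  have hcomm : Commute (uOp b e) (pairParity (ladderGen b c) (e.1, none) (e.2.1, none)) :=
    commute_pairParity_of_commute (hb.commute_uOp_fermion hg he hi)
      (hb.commute_uOp_fermion hg he hj)
  exact IsSelfAdjoint.smul (Complex.conj_ofReal _)
    (((hpair (some e.2.2)).commute_iff (hpair none)).1 hcomm)

end IsColoredGraph

end BondOperators

section LeastEigenvalue

lemma eigenvaluesIn_congr {V : Type*} [AddCommGroup V] [Module ℂ V] {H H' : Module.End ℂ V}
    {S : Submodule ℂ V} (h : ∀ ψ ∈ S, H ψ = H' ψ) : eigenvaluesIn H S = eigenvaluesIn H' S := by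
  ext t
  refine exists_congr fun ψ => and_congr_right fun hψ => and_congr_left fun _ => ?_
  rw [Module.End.mem_eigenspace_iff, Module.End.mem_eigenspace_iff, h ψ hψ]

variable {V : Type*} [NormedAddCommGroup V] [InnerProductSpace ℂ V] [FiniteDimensional ℂ V]
  {H : Module.End ℂ V}

lemma exists_isLeast_eigenvaluesIn (hH : H.IsSymmetric) {S : Submodule ℂ V}
    (hS : ∀ ψ ∈ S, H ψ ∈ S) (hne : S ≠ ⊥) : ∃ E, IsLeast (eigenvaluesIn H S) E := by
  have hfin : (eigenvaluesIn H S).Finite :=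
    ((Module.End.finite_hasEigenvalue H).preimage Complex.ofReal_injective.injOn).subset
      fun t ⟨_, _, hψ⟩ => Module.End.hasEigenvalue_of_hasEigenvector hψ
  have hnonempty : (eigenvaluesIn H S).Nonempty := by
    have : Nontrivial S := S.nontrivial_iff_ne_bot.2 hne
    obtain ⟨μ, hμ⟩ := Module.End.exists_eigenvalue (H.restrict hS)
    obtain ⟨ψ, hψ⟩ := hμ.exists_hasEigenvector
    have hHψ : H.HasEigenvector μ ψ := ⟨Module.End.mem_eigenspace_iff.2
      (congrArg Subtype.val hψ.apply_eq_smul), fun h => hψ.2 (Subtype.ext h)⟩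
    obtain ⟨t, rfl⟩ := Complex.conj_eq_iff_real.1
      (hH.conj_eigenvalue_eq_self (Module.End.hasEigenvalue_of_hasEigenvector hHψ))
    exact ⟨t, ψ, ψ.2, hHψ⟩
  obtain ⟨E, hE⟩ := hfin.exists_minimal hnonempty
  exact ⟨E, hE.1, fun t ht => not_lt.1 fun hlt => hlt.not_ge (hE.2 ht hlt.le)⟩

lemma isLeast_leastEig [Nontrivial V] (hH : H.IsSymmetric) :
    IsLeast (eigenvaluesIn H ⊤) (leastEig H) := by
  have heq : eigenvaluesIn H ⊤ = {t : ℝ | H.HasEigenvalue (t : ℂ)} := Set.ext fun t =>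
    ⟨fun ⟨_, _, hψ⟩ => Module.End.hasEigenvalue_of_hasEigenvector hψ,
      fun ht => ht.exists_hasEigenvector.imp fun _ hψ => ⟨trivial, hψ⟩⟩
  obtain ⟨E, hE⟩ := exists_isLeast_eigenvaluesIn hH (S := ⊤) (fun _ _ => trivial) top_ne_bot
  rwa [leastEig, ← heq, hE.csInf_eq]

end LeastEigenvalue

section Sectors

variable {V : Type*} [AddCommGroup V] [Module ℂ V] {n : ℕ} {bonds : List (ℕ × ℕ × BondType)}
  {b : ℕ → BondType → Module.End ℂ V} {c : ℕ → Module.End ℂ V} {J : ℕ × ℕ → ℝ} {a : ℕ → ℕ → ℝ}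

/-- The joint eigenspace of the bond operators on which `J_{(ij)} u_{ij}` acts as `a i j`. -/
def sector (b : ℕ → BondType → Module.End ℂ V) (J : ℕ × ℕ → ℝ) (a : ℕ → ℕ → ℝ)
    (bonds : List (ℕ × ℕ × BondType)) : Submodule ℂ V :=
  ⨅ e ∈ bonds, ((J (e.1, e.2.1) : ℂ) • uOp b e).eigenspace (a e.1 e.2.1)

lemma mem_sector {ψ : V} : ψ ∈ sector b J a bonds ↔
    ∀ e ∈ bonds, (J (e.1, e.2.1) : ℂ) • uOp b e ψ = (a e.1 e.2.1 : ℂ) • ψ := by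
  simp only [sector, Submodule.mem_iInf, Module.End.mem_eigenspace_iff, LinearMap.smul_apply]

lemma apply_mem_sector {T : Module.End ℂ V} (hT : ∀ e ∈ bonds, Commute (uOp b e) T) {ψ : V}
    (hψ : ψ ∈ sector b J a bonds) : T ψ ∈ sector b J a bonds := mem_sector.2 fun e he => by
  rw [← Module.End.mul_apply, (hT e he).eq, Module.End.mul_apply, ← map_smul,
    mem_sector.1 hψ e he, map_smul]

lemma mem_sector_of_units {ε : ℕ × ℕ × BondType → ℤˣ} {ψ : V}
    (hψ : ∀ e ∈ bonds, uOp b e ψ = ε e • ψ)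
    (ha : ∀ e ∈ bonds, a e.1 e.2.1 = J (e.1, e.2.1) * (ε e : ℤ)) : ψ ∈ sector b J a bonds :=
  mem_sector.2 fun e he => by
    rw [hψ e he, ha e he, Units.smul_def, ← Int.cast_smul_eq_zsmul ℂ, smul_smul]
    push_cast
    rfl

lemma abs_mul_intUnit (x : ℝ) (ε : ℤˣ) : |x * (ε : ℤ)| = |x| := by
  rcases Int.units_eq_one_or ε with rfl | rfl <;> simp

namespace IsColoredGraph

lemma sector_ne_bot [Nontrivial V] (hb : IsColoredGraph n bonds)
    (hg : IsCliffordOn (ladderGen b c) {p | p.1 < n}) (ha : IsSignedCoupling bonds J a) :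
    sector b J a bonds ≠ ⊥ := by
  have hsign : ∀ e : ℕ × ℕ × BondType, ∃ ε : ℤˣ,
      e ∈ bonds → a e.1 e.2.1 = J (e.1, e.2.1) * (ε : ℤ) := by
    intro e
    by_cases he : e ∈ bonds
    · rcases abs_eq_abs.1 (ha.abs_eq _ _ (mem_edges_of_mem he)) with h | h
      · exact ⟨1, fun _ => by simpa using h⟩
      · exact ⟨-1, fun _ => by simpa using h⟩
    · exact ⟨1, fun h => absurd h he⟩
  choose ε hε using hsign
  obtain ⟨ψ, hψ0, hψ⟩ := exists_forall_apply_eq_units_smul_of_antiCommute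
    (u := uOp b) (f := fun e => b e.1 e.2.2) (List.Nodup.of_map _ hb.nodup)
    (fun e he => hb.uOp_mul_self hg he) (fun e he e' he' => hb.commute_uOp_uOp hg he he')
    (fun e he => hg.mul_self (e.1, some e.2.2) (hb.lt e he).1)
    (fun e he => hb.antiCommute_uOp_bondMajorana hg he)
    (fun e he e' he' hee' => hb.commute_uOp_bondMajorana hg he he' hee' (Sym2.mem_mk_left _ _)) ε
  exact (Submodule.ne_bot_iff _).2 ⟨ψ, mem_sector_of_units hψ hε, hψ0⟩

lemma exists_mem_eigenvaluesIn_sector (hb : IsColoredGraph n bonds)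
    (hg : IsCliffordOn (ladderGen b c) {p | p.1 < n}) (hJ : ∀ i j, J (i, j) = J (j, i)) {E : ℝ}
    (hE : E ∈ eigenvaluesIn (fermH J b c bonds) ⊤) :
    ∃ a, IsSignedCoupling bonds J a ∧
      E ∈ eigenvaluesIn (fermH J b c bonds) (sector b J a bonds) := by
  obtain ⟨χ, -, hχ, hχ0⟩ := hE
  obtain ⟨ε, ψ, hψE, hψ0, hψ⟩ := exists_forall_apply_eq_units_smul
    (fun e he => hb.uOp_mul_self hg he) (fun e he e' he' => hb.commute_uOp_uOp hg he he')
    (fun e he => Module.End.mapsTo_genEigenspace_of_comm (hb.commute_uOp_fermH hg J he).symm E 1)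
    ((Submodule.ne_bot_iff _).2 ⟨χ, hχ, hχ0⟩)
  obtain ⟨a, ha, hav⟩ := hb.exists_isSignedCoupling (x := fun e => J (e.1, e.2.1) * (ε e : ℤ)) hJ
    fun e _ => abs_mul_intUnit _ _
  exact ⟨a, ha, ψ, mem_sector_of_units hψ hav, hψE, hψ0⟩

end IsColoredGraph

end Sectors

section HoppingMatrix

open Matrix

variable {ι : Type*} {f : ι → ℕ} {s : ι → ℝ} {a : ℕ → ℕ → ℝ}

/-- The one-particle matrix of the sector with effective couplings `a`, for the Majorana operators
`s p • c (f p)`: the vertices are labelled by `f` and gauged by the signs `s`. -/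
def hoppingMatrix (f : ι → ℕ) (s : ι → ℝ) (a : ℕ → ℕ → ℝ) : Matrix ι ι ℂ :=
  .of fun p q => Complex.I * ((s p * s q * a (f p) (f q) : ℝ) : ℂ)

lemma isHermitian_hoppingMatrix (ha : ∀ i j, a j i = -a i j) :
    (hoppingMatrix f s a).IsHermitian := by
  ext p q
  simp only [hoppingMatrix, conjTranspose_apply, of_apply, star_mul', Complex.star_def,
    Complex.conj_I, Complex.conj_ofReal, ha (f p) (f q)]
  push_cast
  ring

lemma transpose_hoppingMatrix (ha : ∀ i j, a j i = -a i j) :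
    (hoppingMatrix f s a)ᵀ = -hoppingMatrix f s a := by
  ext p q
  rw [Matrix.neg_apply]
  simp only [hoppingMatrix, transpose_apply, of_apply, ha (f p) (f q)]
  push_cast
  ring

variable {V : Type*} [AddCommGroup V] [Module ℂ V] {n : ℕ} {bonds : List (ℕ × ℕ × BondType)}
  {b : ℕ → BondType → Module.End ℂ V} {c : ℕ → Module.End ℂ V} {J : ℕ × ℕ → ℝ}

lemma IsColoredGraph.fermH_apply_of_mem_sector (hb : IsColoredGraph n bonds)
    (hg : IsCliffordOn (ladderGen b c) {p | p.1 < n}) {ψ : V} (hψ : ψ ∈ sector b J a bonds) :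
    fermH J b c bonds ψ =
      (bonds.map fun e => (a e.1 e.2.1 : ℂ) • Complex.I • c e.1 (c e.2.1 ψ)).sum := by
  have hsum : ∀ l : List (Module.End ℂ V), l.sum ψ = (l.map fun T => T ψ).sum :=
    map_list_sum (LinearMap.applyₗ ψ : Module.End ℂ V →ₗ[ℂ] V)
  rw [fermH, hsum, List.map_map]
  refine congrArg List.sum (List.map_congr_left fun e he => ?_)
  have hcψ : Complex.I • c e.1 (c e.2.1 ψ) ∈ sector b J a bonds :=
    Submodule.smul_mem _ _ (apply_mem_sector (T := c e.1 * c e.2.1) (fun e' he' =>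
      (hb.commute_uOp_fermion hg he' (hb.lt e he).1).mul_right
        (hb.commute_uOp_fermion hg he' (hb.lt e he).2)) hψ)
  exact mem_sector.1 hcψ e he

lemma hoppingMatrix_smul_gauged {p q : ι} (hp : s p * s p = 1) (hq : s q * s q = 1) (ψ : V) :
    hoppingMatrix f s a p q • (s p : ℂ) • c (f p) ((s q : ℂ) • c (f q) ψ) =
      (a (f p) (f q) : ℂ) • Complex.I • c (f p) (c (f q) ψ) := by
  have hp' : (s p : ℂ) * s p = 1 := mod_cast hp
  have hq' : (s q : ℂ) * s q = 1 := mod_cast hq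
  simp only [hoppingMatrix, of_apply, map_smul, smul_smul]
  congr 1
  push_cast
  linear_combination (a (f p) (f q) * Complex.I) * (s p * s p * hq' + hp')

lemma IsColoredGraph.fermH_apply_eq_quadOp [Fintype ι] (hb : IsColoredGraph n bonds)
    (hg : IsCliffordOn (ladderGen b c) {p | p.1 < n}) (ha : IsSignedCoupling bonds J a)
    (hf : Function.Injective f) (hrange : Set.range f = {k | k < n}) (hs : ∀ p, s p * s p = 1)
    {ψ : V} (hψ : ψ ∈ sector b J a bonds) :
    fermH J b c bonds ψ = quadOp (fun p => (s p : ℂ) • c (f p)) (hoppingMatrix f s a) ψ := by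
  let G : ℕ → ℕ → V := fun i j => (a i j : ℂ) • Complex.I • c i (c j ψ)
  have hzero : ∀ i j, s(i, j) ∉ edges bonds → G i j = 0 := fun i j hij => by
    simp only [G, ha.eq_zero i j hij, Complex.ofReal_zero, zero_smul]
  have hbond : ∀ e ∈ bonds, G e.2.1 e.1 = G e.1 e.2.1 := fun e he => by
    have hanti := congrArg (fun T : Module.End ℂ V => T ψ)
      (hg.antiCommute (hb.lt e he).1 (hb.lt e he).2 (hb.bondEnds_ne he none))
    simp only [ladderGen, Module.End.mul_apply, LinearMap.neg_apply] at hanti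
    simp only [G, hanti, ha.anti e.1 e.2.1, Complex.ofReal_neg, neg_smul, smul_neg]
  have hsymm : ∀ i j, G i j = G j i := by
    intro i j
    by_cases hij : s(i, j) ∈ edges bonds
    · obtain ⟨e, he, h | h⟩ := mem_edges_iff.1 hij <;> obtain ⟨rfl, rfl⟩ := Prod.mk.inj h
      · exact (hbond e he).symm
      · exact hbond e he
    · rw [hzero i j hij, hzero j i (by rwa [Sym2.eq_swap])]
  rw [hb.fermH_apply_of_mem_sector hg hψ, quadOp_apply]
  simp only [LinearMap.smul_apply, LinearMap.sum_apply, Module.End.mul_apply,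
    hoppingMatrix_smul_gauged (hs _) (hs _)]
  rw [hb.sum_sum_eq_two_nsmul hf hrange hsymm hzero, ← Nat.cast_smul_eq_nsmul ℂ, smul_smul]
  norm_num [G]

end HoppingMatrix

section SectorEnergy

variable {V : Type*} [NormedAddCommGroup V] [InnerProductSpace ℂ V] [FiniteDimensional ℂ V]
  {N : ℕ} {b : ℕ → BondType → (V →ₗ[ℂ] V)} {c : ℕ → (V →ₗ[ℂ] V)}

namespace IsLadderMajorana

lemma isCliffordOn (hbc : IsLadderMajorana N b c) :
    IsCliffordOn (ladderGen b c) {p | p.1 < 4 * N} where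
  mul_self p hp := by
    have hpp := hbc.2 (⟨p.1, hp⟩, p.2) (⟨p.1, hp⟩, p.2)
    rw [if_pos rfl, ← two_smul ℂ] at hpp
    exact smul_right_injective _ (two_ne_zero' ℂ) hpp
  antiCommute p hp q hq hpq := by
    have hsum := hbc.2 (⟨p.1, hp⟩, p.2) (⟨q.1, hq⟩, q.2)
    rw [if_neg (by simpa [Prod.ext_iff, Fin.ext_iff] using hpq)] at hsum
    exact eq_neg_of_add_eq_zero_left hsum

lemma isSymmetric_fermH (hbc : IsLadderMajorana N b c) {bonds : List (ℕ × ℕ × BondType)}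
    (hb : IsColoredGraph (4 * N) bonds) (J : ℕ × ℕ → ℝ) : (fermH J b c bonds).IsSymmetric :=
  (LinearMap.isSymmetric_iff_isSelfAdjoint _).2
    (hb.isSelfAdjoint_fermH hbc.isCliffordOn (fun p hp => hbc.1 (⟨p.1, hp⟩, p.2)) J)

lemma isLeast_eigenvaluesIn_sector [Nontrivial V] (hbc : IsLadderMajorana N b c)
    {bonds : List (ℕ × ℕ × BondType)} (hb : IsColoredGraph (4 * N) bonds) {J : ℕ × ℕ → ℝ}
    {a : ℕ → ℕ → ℝ} (ha : IsSignedCoupling bonds J a) {ι : Type*} [Fintype ι] [DecidableEq ι]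
    {f : ι → ℕ} (hf : Function.Injective f) (hrange : Set.range f = {k | k < 4 * N}) {s : ι → ℝ}
    (hs : ∀ p, s p * s p = 1) :
    IsLeast (eigenvaluesIn (fermH J b c bonds) (sector b J a bonds))
      (-traceNorm (hoppingMatrix f s a) / 2) := by
  have hg := hbc.isCliffordOn
  have hfn : ∀ p, f p < 4 * N := fun p => hrange.subset (Set.mem_range_self p)
  obtain ⟨E, hE⟩ := exists_isLeast_eigenvaluesIn (hbc.isSymmetric_fermH hb J)
    (fun ψ hψ => apply_mem_sector (fun e he => hb.commute_uOp_fermH hg J he) hψ)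
    (hb.sector_ne_bot hg ha)
  have hclifford : IsCliffordOn (fun p => (s p : ℂ) • c (f p)) Set.univ :=
    (hg.comp (f := fun p => (f p, none)) (fun p _ => hfn p)
      fun p _ q _ h => hf (Prod.mk.inj h).1).smul fun p _ => mod_cast hs p
  have hquad : ∀ ψ ∈ sector b J a bonds, fermH J b c bonds ψ =
      quadOp (fun p => (s p : ℂ) • c (f p)) (hoppingMatrix f s a) ψ :=
    fun ψ hψ => hb.fermH_apply_eq_quadOp hg ha hf hrange hs hψ
  rwa [← hclifford.eq_neg_traceNorm_div_two (isHermitian_hoppingMatrix ha.anti)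
    (transpose_hoppingMatrix ha.anti) (S := sector b J a bonds) (fun p ψ hψ =>
      Submodule.smul_mem _ _ (apply_mem_sector (fun e he => hb.commute_uOp_fermion hg he (hfn p))
        hψ)) (eigenvaluesIn_congr hquad ▸ hE)]

end IsLadderMajorana

end SectorEnergy

section Reflection

namespace LadderReflection

variable {N : ℕ} {bonds : List (ℕ × ℕ × BondType)} (R : LadderReflection N bonds) {J : ℕ × ℕ → ℝ}
  {a : ℕ → ℕ → ℝ} {i j : ℕ}

lemma lt_of_mem_Λm (hi : i ∈ R.Λm) : i < 4 * N :=
  Finset.mem_range.1 (R.union ▸ Finset.mem_union_left _ hi)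

lemma lt_of_mem_Λp (hi : i ∈ R.Λp) : i < 4 * N :=
  Finset.mem_range.1 (R.union ▸ Finset.mem_union_right _ hi)

lemma notMem_Λm (hi : i ∈ R.Λp) : i ∉ R.Λm :=
  Finset.disjoint_right.1 R.disj hi

lemma notMem_Λp (hi : i ∈ R.Λm) : i ∉ R.Λp :=
  Finset.disjoint_left.1 R.disj hi

lemma mem_Λp_of_notMem (hi : i < 4 * N) (him : i ∉ R.Λm) : i ∈ R.Λp :=
  (Finset.mem_union.1 (R.union ▸ Finset.mem_range.2 hi)).resolve_left him

lemma mem_edges_θ (hij : s(i, j) ∈ edges bonds) : s(R.θ i, R.θ j) ∈ edges bonds := by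
  obtain ⟨e, he, h | h⟩ := mem_edges_iff.1 hij <;> obtain ⟨rfl, rfl⟩ := Prod.mk.inj h <;>
    rcases R.mapsB e he with h' | h' <;> refine mem_edges_iff.2 ⟨_, h', ?_⟩
  exacts [Or.inl rfl, Or.inr rfl, Or.inr rfl, Or.inl rfl]

lemma mem_edges_θ_iff (hi : i < 4 * N) (hj : j < 4 * N) :
    s(R.θ i, R.θ j) ∈ edges bonds ↔ s(i, j) ∈ edges bonds :=
  ⟨fun h => by simpa only [R.invol i hi, R.invol j hj] using R.mem_edges_θ h, R.mem_edges_θ⟩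

lemma mem_Λm_iff_of_mem_edges (hj : j < 4 * N) (hij : s(i, j) ∈ edges bonds)
    (hne : R.θ i ≠ j) : i ∈ R.Λm ↔ j ∈ R.Λm := by
  have hne' : R.θ j ≠ i := fun h => hne (by rw [← h, R.invol j hj])
  obtain ⟨e, he, h | h⟩ := mem_edges_iff.1 hij <;> obtain ⟨rfl, rfl⟩ := Prod.mk.inj h <;>
    rcases R.sides e he with ⟨h1, h2⟩ | ⟨h1, h2⟩ | h' | h'
  all_goals first
    | exact absurd h' hne
    | exact absurd h' hne'
    | exact iff_of_true ‹_› ‹_›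
    | exact iff_of_false (R.notMem_Λm ‹_›) (R.notMem_Λm ‹_›)

/-- The gauge transformation of a vertex and its mirror image that makes the coupling of their
crossing bond, oriented from `Λ₋` to `Λ₊`, nonnegative. -/
def gaugeSign (a : ℕ → ℕ → ℝ) (i : ℕ) : ℝ :=
  if (if i ∈ R.Λm then a i (R.θ i) else a (R.θ i) i) < 0 then -1 else 1

lemma gaugeSign_mul_self (a : ℕ → ℕ → ℝ) (i : ℕ) : R.gaugeSign a i * R.gaugeSign a i = 1 := by
  unfold gaugeSign
  split_ifs <;> norm_num

lemma abs_gaugeSign (a : ℕ → ℕ → ℝ) (i : ℕ) : |R.gaugeSign a i| = 1 :=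
  (mul_self_eq_one_iff.1 (R.gaugeSign_mul_self a i)).elim (fun h => by rw [h, abs_one])
    fun h => by rw [h, abs_neg, abs_one]

lemma gaugeSign_θ (a : ℕ → ℕ → ℝ) (hi : i < 4 * N) : R.gaugeSign a (R.θ i) = R.gaugeSign a i := by
  by_cases him : i ∈ R.Λm
  · simp only [gaugeSign, him, R.notMem_Λm (R.swap_m i him), R.invol i hi, if_true, if_false]
  · simp only [gaugeSign, him, R.swap_p i (R.mem_Λp_of_notMem hi him), R.invol i hi, if_true,
      if_false]

lemma gaugeSign_mul_of_mem_Λm (a : ℕ → ℕ → ℝ) (hi : i ∈ R.Λm) :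
    R.gaugeSign a i * a i (R.θ i) = |a i (R.θ i)| := by
  simp only [gaugeSign, hi, if_true]
  split_ifs with h
  · rw [abs_of_neg h, neg_one_mul]
  · rw [abs_of_nonneg (not_lt.1 h), one_mul]

lemma gaugeSign_mul_of_mem_Λp (ha : ∀ i j, a j i = -a i j) (hi : i ∈ R.Λp) :
    R.gaugeSign a i * a i (R.θ i) = -|a i (R.θ i)| := by
  have h := R.gaugeSign_mul_of_mem_Λm a (R.swap_p i hi)
  rw [R.invol i (R.lt_of_mem_Λp hi), R.gaugeSign_θ a (R.lt_of_mem_Λp hi), ha i (R.θ i), abs_neg,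
    mul_neg] at h
  rw [← h, neg_neg]

/-- The effective couplings obtained from `a` by replacing those within `Λ` (one of the two sides)
by minus their gauged mirror images. -/
def reflectCoupling (Λ : Finset ℕ) (a : ℕ → ℕ → ℝ) (i j : ℕ) : ℝ :=
  if i ∈ Λ ∧ j ∈ Λ then -(R.gaugeSign a i * R.gaugeSign a j * a (R.θ i) (R.θ j)) else a i j

lemma reflectCoupling_of_mem {Λ : Finset ℕ} (a : ℕ → ℕ → ℝ) (hi : i ∈ Λ) (hj : j ∈ Λ) :
    R.reflectCoupling Λ a i j = -(R.gaugeSign a i * R.gaugeSign a j * a (R.θ i) (R.θ j)) :=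
  if_pos ⟨hi, hj⟩

lemma reflectCoupling_of_notMem_left {Λ : Finset ℕ} (a : ℕ → ℕ → ℝ) (hi : i ∉ Λ) :
    R.reflectCoupling Λ a i j = a i j :=
  if_neg fun h => hi h.1

lemma reflectCoupling_of_notMem_right {Λ : Finset ℕ} (a : ℕ → ℕ → ℝ) (hj : j ∉ Λ) :
    R.reflectCoupling Λ a i j = a i j :=
  if_neg fun h => hj h.2

lemma abs_apply_θ (hJ : ∀ i j, J (i, j) = J (j, i))
    (hJθ : ∀ e ∈ bonds, |J (R.θ e.1, R.θ e.2.1)| = |J (e.1, e.2.1)|)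
    (hij : s(i, j) ∈ edges bonds) : |J (R.θ i, R.θ j)| = |J (i, j)| := by
  obtain ⟨e, he, h | h⟩ := mem_edges_iff.1 hij <;> obtain ⟨rfl, rfl⟩ := Prod.mk.inj h
  · exact hJθ e he
  · rw [hJ, hJθ e he, hJ]

lemma isSignedCoupling_reflectCoupling (hJ : ∀ i j, J (i, j) = J (j, i))
    (hJθ : ∀ e ∈ bonds, |J (R.θ e.1, R.θ e.2.1)| = |J (e.1, e.2.1)|)
    (ha : IsSignedCoupling bonds J a) {Λ : Finset ℕ} (hΛ : ∀ i ∈ Λ, i < 4 * N) :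
    IsSignedCoupling bonds J (R.reflectCoupling Λ a) where
  anti i j := by
    by_cases h : i ∈ Λ ∧ j ∈ Λ
    · rw [R.reflectCoupling_of_mem a h.1 h.2, R.reflectCoupling_of_mem a h.2 h.1,
        ha.anti (R.θ i) (R.θ j)]
      ring
    · rw [reflectCoupling, reflectCoupling, if_neg h, if_neg (mt And.symm h), ha.anti]
  abs_eq i j hij := by
    unfold reflectCoupling
    split_ifs
    · rw [abs_neg, abs_mul, abs_mul, R.abs_gaugeSign, R.abs_gaugeSign, one_mul, one_mul,
        ha.abs_eq _ _ (R.mem_edges_θ hij), R.abs_apply_θ hJ hJθ hij]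
    · exact ha.abs_eq i j hij
  eq_zero i j hij := by
    unfold reflectCoupling
    split_ifs with h
    · rw [ha.eq_zero _ _ (mt (R.mem_edges_θ_iff (hΛ i h.1) (hΛ j h.2)).1 hij), mul_zero, neg_zero]
    · exact ha.eq_zero i j hij

end LadderReflection

end Reflection

section ReflectedEnergy

open Matrix
open scoped ComplexOrder MatrixOrder

namespace LadderReflection

variable {N : ℕ} {bonds : List (ℕ × ℕ × BondType)} (R : LadderReflection N bonds) {J : ℕ × ℕ → ℝ}
  {a a' : ℕ → ℕ → ℝ}

/-- The vertices, labelled by two copies of `Λ₋` interchanged by the reflection. -/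
def foldedVertex : R.Λm ⊕ R.Λm → ℕ :=
  Sum.elim (fun v => v) fun v => R.θ v

/-- The gauge signs for the labelling `foldedVertex`, transforming only the copy of `Λ₋` that
labels `Λ₊`. -/
def foldedSign (a : ℕ → ℕ → ℝ) : R.Λm ⊕ R.Λm → ℝ :=
  Sum.elim 1 fun v => R.gaugeSign a v

lemma θ_injOn {i j : ℕ} (hi : i < 4 * N) (hj : j < 4 * N) (h : R.θ i = R.θ j) : i = j := by
  rw [← R.invol i hi, h, R.invol j hj]

lemma foldedVertex_injective : Function.Injective R.foldedVertex := by
  have hsides : ∀ v w : R.Λm, (v : ℕ) ≠ R.θ w := fun v w h =>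
    R.notMem_Λm (R.swap_m w w.2) (h ▸ v.2)
  refine Function.Injective.sumElim Subtype.val_injective (fun v w h => Subtype.ext ?_) hsides
  exact R.θ_injOn (R.lt_of_mem_Λm v.2) (R.lt_of_mem_Λm w.2) h

lemma range_foldedVertex : Set.range R.foldedVertex = {k | k < 4 * N} := by
  ext i
  constructor
  · rintro ⟨v | v, rfl⟩
    · exact R.lt_of_mem_Λm v.2
    · exact R.lt_of_mem_Λp (R.swap_m v v.2)
  · intro hi
    by_cases him : i ∈ R.Λm
    · exact ⟨Sum.inl ⟨i, him⟩, rfl⟩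
    · exact ⟨Sum.inr ⟨R.θ i, R.swap_p i (R.mem_Λp_of_notMem hi him)⟩, R.invol i hi⟩

lemma foldedSign_mul_self (a : ℕ → ℕ → ℝ) (p : R.Λm ⊕ R.Λm) :
    R.foldedSign a p * R.foldedSign a p = 1 := by
  rcases p with _ | v
  · exact one_mul 1
  · exact R.gaugeSign_mul_self a v

/-- The strengths of the crossing bonds. -/
def crossingMatrix (a : ℕ → ℕ → ℝ) : Matrix R.Λm R.Λm ℂ :=
  diagonal fun v => ((|a v (R.θ v)| : ℝ) : ℂ)

lemma crossingMatrix_nonneg (a : ℕ → ℕ → ℝ) : 0 ≤ R.crossingMatrix a :=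
  (PosSemidef.diagonal fun _ => Complex.zero_le_real.2 (abs_nonneg _)).nonneg

lemma gaugeSign_mul_crossing (ha : IsSignedCoupling bonds J a) (v w : R.Λm) :
    ((R.gaugeSign a w * a v (R.θ w) : ℝ) : ℂ) = R.crossingMatrix a v w := by
  rcases eq_or_ne v w with rfl | hvw
  · rw [crossingMatrix, diagonal_apply_eq, R.gaugeSign_mul_of_mem_Λm a v.2]
  · have hθw := R.swap_m w w.2
    have hne : R.θ v ≠ R.θ w := fun h =>
      hvw (Subtype.ext (R.θ_injOn (R.lt_of_mem_Λm v.2) (R.lt_of_mem_Λm w.2) h))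
    rw [crossingMatrix, diagonal_apply_ne _ hvw, ha.eq_zero, mul_zero, Complex.ofReal_zero]
    exact fun h => R.notMem_Λm hθw
      ((R.mem_Λm_iff_of_mem_edges (R.lt_of_mem_Λp hθw) h hne).1 v.2)

lemma hoppingMatrix_folded (ha : IsSignedCoupling bonds J a) (ha' : ∀ i j, a' j i = -a' i j)
    (hcross : ∀ v w : R.Λm, a' v (R.θ w) = a v (R.θ w)) :
    hoppingMatrix R.foldedVertex (R.foldedSign a) a' =
      fromBlocks (hoppingMatrix (fun v : R.Λm => (v : ℕ)) 1 a') (Complex.I • R.crossingMatrix a)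
        (-(Complex.I • R.crossingMatrix a))
        (hoppingMatrix (fun v : R.Λm => R.θ v) (fun v => R.gaugeSign a v) a') := by
  have hsymm : ∀ v w, R.crossingMatrix a v w = R.crossingMatrix a w v := fun v w =>
    congrFun₂ (diagonal_transpose _).symm v w
  ext (v | v) (w | w)
  · rfl
  · simp only [hoppingMatrix, foldedVertex, foldedSign, Sum.elim_inl, Sum.elim_inr, of_apply,
      fromBlocks_apply₁₂, Matrix.smul_apply, smul_eq_mul, hcross, Pi.one_apply, one_mul,
      R.gaugeSign_mul_crossing ha]
  · simp only [hoppingMatrix, foldedVertex, foldedSign, Sum.elim_inl, Sum.elim_inr, of_apply,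
      fromBlocks_apply₂₁, Matrix.neg_apply, Matrix.smul_apply, smul_eq_mul, Pi.one_apply, mul_one,
      ha' w (R.θ v), hcross, mul_neg, Complex.ofReal_neg, R.gaugeSign_mul_crossing ha, hsymm w v]
  · rfl

lemma hoppingMatrix_reflectCoupling_Λp (a : ℕ → ℕ → ℝ) :
    hoppingMatrix (fun v : R.Λm => R.θ v) (fun v => R.gaugeSign a v)
        (R.reflectCoupling R.Λp a) =
      -hoppingMatrix (fun v : R.Λm => (v : ℕ)) 1 a := by
  ext v w
  have hv := R.lt_of_mem_Λm v.2
  have hw := R.lt_of_mem_Λm w.2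
  rw [Matrix.neg_apply, hoppingMatrix, of_apply, hoppingMatrix, of_apply,
    R.reflectCoupling_of_mem a (R.swap_m v v.2) (R.swap_m w w.2), R.invol v hv, R.invol w hw,
    R.gaugeSign_θ a hv, R.gaugeSign_θ a hw]
  have hsq : R.gaugeSign a v * R.gaugeSign a w * -(R.gaugeSign a v * R.gaugeSign a w * a v w) =
      -(a v w) := by
    linear_combination -a v w * (R.gaugeSign a v * R.gaugeSign a v * R.gaugeSign_mul_self a w
      + R.gaugeSign_mul_self a v)
  simp only [hsq, Pi.one_apply, one_mul, Complex.ofReal_neg, mul_neg]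

lemma hoppingMatrix_reflectCoupling_Λm (a : ℕ → ℕ → ℝ) :
    hoppingMatrix (fun v : R.Λm => (v : ℕ)) 1 (R.reflectCoupling R.Λm a) =
      -hoppingMatrix (fun v : R.Λm => R.θ v) (fun v => R.gaugeSign a v) a := by
  ext v w
  rw [Matrix.neg_apply, hoppingMatrix, of_apply, hoppingMatrix, of_apply,
    R.reflectCoupling_of_mem a v.2 w.2]
  simp only [Pi.one_apply, one_mul, Complex.ofReal_neg, mul_neg]

lemma hoppingMatrix_congr {ι : Type*} {f : ι → ℕ} {s : ι → ℝ}
    (h : ∀ p q, a (f p) (f q) = a' (f p) (f q)) : hoppingMatrix f s a = hoppingMatrix f s a' := by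
  simp only [hoppingMatrix, h]

lemma two_mul_traceNorm_hoppingMatrix_le (hJ : ∀ i j, J (i, j) = J (j, i))
    (hJθ : ∀ e ∈ bonds, |J (R.θ e.1, R.θ e.2.1)| = |J (e.1, e.2.1)|)
    (ha : IsSignedCoupling bonds J a) :
    2 * traceNorm (hoppingMatrix R.foldedVertex (R.foldedSign a) a) ≤
      traceNorm (hoppingMatrix R.foldedVertex (R.foldedSign a) (R.reflectCoupling R.Λp a)) +
        traceNorm (hoppingMatrix R.foldedVertex (R.foldedSign a) (R.reflectCoupling R.Λm a)) := by
  have hp := R.isSignedCoupling_reflectCoupling hJ hJθ ha fun _ => R.lt_of_mem_Λp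
  have hm := R.isSignedCoupling_reflectCoupling hJ hJθ ha fun _ => R.lt_of_mem_Λm
  have hΛm : ∀ v : R.Λm, (v : ℕ) ∉ R.Λp := fun v => R.notMem_Λp v.2
  have hΛp : ∀ v : R.Λm, R.θ v ∉ R.Λm := fun v => R.notMem_Λm (R.swap_m v v.2)
  rw [R.hoppingMatrix_folded ha ha.anti fun _ _ => rfl,
    R.hoppingMatrix_folded ha hp.anti fun v _ => R.reflectCoupling_of_notMem_left a (hΛm v),
    R.hoppingMatrix_folded ha hm.anti fun _ w => R.reflectCoupling_of_notMem_right a (hΛp w),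
    hoppingMatrix_congr fun v w : R.Λm => R.reflectCoupling_of_notMem_left a (hΛm v),
    hoppingMatrix_congr fun v w : R.Λm => R.reflectCoupling_of_notMem_left a (hΛp v),
    R.hoppingMatrix_reflectCoupling_Λp, R.hoppingMatrix_reflectCoupling_Λm]
  exact two_mul_traceNorm_fromBlocks_le (isHermitian_hoppingMatrix ha.anti)
    (isHermitian_hoppingMatrix ha.anti) (R.crossingMatrix_nonneg a)

variable {V : Type*} [NormedAddCommGroup V] [InnerProductSpace ℂ V] [FiniteDimensional ℂ V]
  [Nontrivial V] {b : ℕ → BondType → (V →ₗ[ℂ] V)} {c : ℕ → (V →ₗ[ℂ] V)}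

lemma exists_leastEig_mem_sector_reflectCoupling (hb : IsColoredGraph (4 * N) bonds)
    (hbc : IsLadderMajorana N b c) (hJ : ∀ i j, J (i, j) = J (j, i))
    (hJθ : ∀ e ∈ bonds, |J (R.θ e.1, R.θ e.2.1)| = |J (e.1, e.2.1)|) :
    ∃ a, IsSignedCoupling bonds J a ∧ leastEig (fermH J b c bonds) ∈
      eigenvaluesIn (fermH J b c bonds) (sector b J (R.reflectCoupling R.Λp a) bonds) := by
  have hleast := isLeast_leastEig (hbc.isSymmetric_fermH hb J)
  obtain ⟨a, ha, hmem⟩ := hb.exists_mem_eigenvaluesIn_sector hbc.isCliffordOn hJ hleast.1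
  have henergy := fun a' (ha' : IsSignedCoupling bonds J a') =>
    hbc.isLeast_eigenvaluesIn_sector hb ha' R.foldedVertex_injective R.range_foldedVertex
      (R.foldedSign_mul_self a)
  have hbound := fun a' (ha' : IsSignedCoupling bonds J a') =>
    hleast.2 (let ⟨ψ, _, hψ⟩ := (henergy a' ha').1; ⟨ψ, trivial, hψ⟩)
  have hp := R.isSignedCoupling_reflectCoupling hJ hJθ ha fun _ => R.lt_of_mem_Λp
  have hm := R.isSignedCoupling_reflectCoupling hJ hJθ ha fun _ => R.lt_of_mem_Λm
  have heq : leastEig (fermH J b c bonds) = -traceNorm (hoppingMatrix R.foldedVertex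
      (R.foldedSign a) (R.reflectCoupling R.Λp a)) / 2 := by
    linarith [R.two_mul_traceNorm_hoppingMatrix_le hJ hJθ ha, (henergy a ha).2 hmem,
      hbound _ hp, hbound _ hm]
  exact ⟨a, ha, heq ▸ (henergy _ hp).1⟩

end LadderReflection

end ReflectedEnergy

section MirrorLoop

lemma prod_range_mul_prod_range_mirror {F s : ℕ → ℝ} {M : ℕ} (hs : ∀ k, s k * s k = 1)
    (hmirror : ∀ k < M, F (2 * M - k) = s k * s (k + 1) * F k) {m : ℕ} (hm : m ≤ M) :
    (∏ k ∈ Finset.range m, F k) * ∏ k ∈ Finset.range m, F (2 * M - k) =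
      s 0 * s m * (∏ k ∈ Finset.range m, F k) ^ 2 := by
  induction m with
  | zero => simp only [Finset.range_zero, Finset.prod_empty, hs, one_pow, mul_one]
  | succ m ih =>
    rw [Finset.prod_range_succ, Finset.prod_range_succ, hmirror m hm]
    linear_combination s m * s (m + 1) * F m ^ 2 * ih (by omega) +
      s 0 * s (m + 1) * (∏ k ∈ Finset.range m, F k) ^ 2 * F m ^ 2 * hs m

lemma prod_range_eq_prod_mul_prod_mirror (F : ℕ → ℝ) (M : ℕ) :
    ∏ k ∈ Finset.range (2 * M + 2), F k =
      ((∏ k ∈ Finset.range M, F k) * ∏ k ∈ Finset.range M, F (2 * M - k)) *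
        (F M * F (2 * M + 1)) := by
  have hflip : ∏ k ∈ Finset.range M, F (2 * M - k) = ∏ k ∈ Finset.range M, F (M + 1 + k) := by
    rw [← Finset.prod_range_reflect]
    refine Finset.prod_congr rfl fun k hk => congrArg F ?_
    have := Finset.mem_range.1 hk
    omega
  rw [hflip, Finset.prod_range_succ, show 2 * M + 1 = (M + 1) + M by omega, Finset.prod_range_add,
    Finset.prod_range_succ]
  ring

lemma prod_range_neg_of_mirror {F s : ℕ → ℝ} {M : ℕ} (hs : ∀ k, s k * s k = 1)
    (hmirror : ∀ k < M, F (2 * M - k) = s k * s (k + 1) * F k) (hF : ∀ k < M, F k ≠ 0)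
    (hcross : s 0 * s M * (F M * F (2 * M + 1)) < 0) :
    ∏ k ∈ Finset.range (2 * M + 2), F k < 0 := by
  rw [prod_range_eq_prod_mul_prod_mirror, prod_range_mul_prod_range_mirror hs hmirror le_rfl,
    mul_right_comm]
  have hprod : ∏ k ∈ Finset.range M, F k ≠ 0 :=
    Finset.prod_ne_zero_iff.2 fun k hk => hF k (Finset.mem_range.1 hk)
  exact mul_neg_of_neg_of_pos hcross (by positivity)

variable {N : ℕ} {bonds : List (ℕ × ℕ × BondType)} {J : ℕ × ℕ → ℝ} {a : ℕ → ℕ → ℝ} {L : Loop}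

lemma Loop.IsLoopOf.mem_edges (hL : L.IsLoopOf bonds) {k : ℕ} (hk : k < L.len) :
    s(L.v k, L.v ((k + 1) % L.len)) ∈ edges bonds :=
  mem_edges_iff.2 <| (hL.2.2 k hk).elim (fun h => ⟨_, h, .inl rfl⟩) fun h => ⟨_, h, .inr rfl⟩

lemma Loop.IsLoopOf.mem_edges_succ (hL : L.IsLoopOf bonds) {k : ℕ} (hk : k + 1 < L.len) :
    s(L.v k, L.v (k + 1)) ∈ edges bonds := by
  simpa only [Nat.mod_eq_of_lt hk] using hL.mem_edges (Nat.lt_of_succ_lt hk)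

lemma Loop.IsLoopOf.lt (hL : L.IsLoopOf bonds) {n : ℕ} (hb : IsColoredGraph n bonds) {k : ℕ}
    (hk : k < L.len) : L.v k < n :=
  (hL.2.2 k hk).elim (fun h => (hb.lt _ h).1) fun h => (hb.lt _ h).2

/-- The coupling `a` on the bond from the `k`-th vertex of the loop `L` to its successor. -/
def Loop.coupling (L : Loop) (a : ℕ → ℕ → ℝ) (k : ℕ) : ℝ :=
  a (L.v k) (L.v ((k + 1) % L.len))

lemma Loop.coupling_of_lt (a : ℕ → ℕ → ℝ) {k : ℕ} (hk : k + 1 < L.len) :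
    L.coupling a k = a (L.v k) (L.v (k + 1)) := by
  rw [coupling, Nat.mod_eq_of_lt hk]

lemma Loop.IsLoopOf.abs_coupling (hL : L.IsLoopOf bonds) (ha : IsSignedCoupling bonds J a) {k : ℕ}
    (hk : k < L.len) : |L.coupling a k| = |L.coupling (fun i j => J (i, j)) k| :=
  ha.abs_eq _ _ (hL.mem_edges hk)

lemma Loop.IsLoopOf.coupling_ne_zero (hL : L.IsLoopOf bonds) (ha : IsSignedCoupling bonds J a)
    {k : ℕ} (hk : k < L.len) (hJ : L.coupling (fun i j => J (i, j)) k ≠ 0) :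
    L.coupling a k ≠ 0 := by
  rwa [← abs_ne_zero, hL.abs_coupling ha hk, abs_ne_zero]

lemma Loop.IsLoopOf.abs_prod_coupling (hL : L.IsLoopOf bonds) (ha : IsSignedCoupling bonds J a) :
    |∏ k ∈ Finset.range L.len, L.coupling a k| =
      |∏ k ∈ Finset.range L.len, L.coupling (fun i j => J (i, j)) k| := by
  rw [Finset.abs_prod, Finset.abs_prod]
  exact Finset.prod_congr rfl fun k hk => hL.abs_coupling ha (Finset.mem_range.1 hk)

/-- The loop `L`, of length `2 * M + 2`, is traversed backwards by its mirror image. -/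
structure IsMirrorLoop (R : LadderReflection N bonds) (L : Loop) (M : ℕ) : Prop where
  isLoopOf : L.IsLoopOf bonds
  len_eq : L.len = 2 * M + 2
  θ_v : ∀ k < L.len, R.θ (L.v k) = L.v (2 * M + 1 - k)

namespace LadderReflection

variable (R : LadderReflection N bonds) {i j : ℕ}

lemma reflectCoupling_crossing (a : ℕ → ℕ → ℝ) (hi : i < 4 * N) :
    R.reflectCoupling R.Λp a i (R.θ i) = a i (R.θ i) := by
  by_cases him : i ∈ R.Λm
  · exact R.reflectCoupling_of_notMem_left a (R.notMem_Λp him)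
  · exact R.reflectCoupling_of_notMem_right a
      (R.notMem_Λp (R.swap_p i (R.mem_Λp_of_notMem hi him)))

lemma reflectCoupling_mirror (ha : ∀ i j, a j i = -a i j) (hi : i < 4 * N) (hj : j < 4 * N)
    (hij : i ∈ R.Λm ↔ j ∈ R.Λm) : R.reflectCoupling R.Λp a (R.θ j) (R.θ i) =
      R.gaugeSign a i * R.gaugeSign a j * R.reflectCoupling R.Λp a i j := by
  by_cases him : i ∈ R.Λm
  · have hjm := hij.1 him
    rw [R.reflectCoupling_of_mem a (R.swap_m j hjm) (R.swap_m i him), R.invol i hi, R.invol j hj,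
      R.gaugeSign_θ a hi, R.gaugeSign_θ a hj, R.reflectCoupling_of_notMem_left a (R.notMem_Λp him),
      ha i j]
    ring
  · have hip := R.mem_Λp_of_notMem hi him
    have hjp := R.mem_Λp_of_notMem hj (mt hij.2 him)
    rw [R.reflectCoupling_of_notMem_left a (R.notMem_Λp (R.swap_p j hjp)),
      R.reflectCoupling_of_mem a hip hjp, ha (R.θ i)]
    linear_combination a (R.θ i) (R.θ j) * (R.gaugeSign a j * R.gaugeSign a j *
      R.gaugeSign_mul_self a i + R.gaugeSign_mul_self a j)

lemma gaugeSign_crossing_mul_pos (ha : ∀ i j, a j i = -a i j) (hi : i < 4 * N) (hj : j < 4 * N)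
    (hij : i ∈ R.Λm ↔ j ∈ R.Λm) (hi0 : a i (R.θ i) ≠ 0) (hj0 : a j (R.θ j) ≠ 0) :
    0 < (R.gaugeSign a i * a i (R.θ i)) * (R.gaugeSign a j * a j (R.θ j)) := by
  by_cases him : i ∈ R.Λm
  · rw [R.gaugeSign_mul_of_mem_Λm a him, R.gaugeSign_mul_of_mem_Λm a (hij.1 him)]
    positivity
  · rw [R.gaugeSign_mul_of_mem_Λp ha (R.mem_Λp_of_notMem hi him),
      R.gaugeSign_mul_of_mem_Λp ha (R.mem_Λp_of_notMem hj (mt hij.2 him)), neg_mul_neg]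
    positivity

end LadderReflection

namespace IsMirrorLoop

variable {R : LadderReflection N bonds} {M : ℕ}

lemma mem_Λm_iff (h : IsMirrorLoop R L M) (hb : IsColoredGraph (4 * N) bonds) {k : ℕ}
    (hk : k ≤ M) : L.v k ∈ R.Λm ↔ L.v 0 ∈ R.Λm := by
  have hlen := h.len_eq
  induction k with
  | zero => rfl
  | succ k ih =>
    have hne : R.θ (L.v k) ≠ L.v (k + 1) := fun heq => by
      rw [h.θ_v k (by omega)] at heq
      have := h.isLoopOf.2.1 _ (by omega) _ (by omega) heq
      omega
    exact (R.mem_Λm_iff_of_mem_edges (h.isLoopOf.lt hb (by omega))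
      (h.isLoopOf.mem_edges_succ (by omega)) hne).symm.trans (ih (by omega))

lemma coupling_mid (h : IsMirrorLoop R L M) (a : ℕ → ℕ → ℝ) :
    L.coupling a M = a (L.v M) (R.θ (L.v M)) := by
  have hlen := h.len_eq
  rw [L.coupling_of_lt a (by omega), h.θ_v M (by omega), show 2 * M + 1 - M = M + 1 by omega]

lemma coupling_last (h : IsMirrorLoop R L M) (a : ℕ → ℕ → ℝ) :
    L.coupling a (2 * M + 1) = a (R.θ (L.v 0)) (L.v 0) := by
  have hlen := h.len_eq
  rw [Loop.coupling, ← hlen, Nat.mod_self, h.θ_v 0 (by omega), Nat.sub_zero]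

lemma coupling_mirror (h : IsMirrorLoop R L M) (hb : IsColoredGraph (4 * N) bonds)
    (ha : ∀ i j, a j i = -a i j) {k : ℕ} (hk : k < M) :
    L.coupling (R.reflectCoupling R.Λp a) (2 * M - k) =
      R.gaugeSign a (L.v k) * R.gaugeSign a (L.v (k + 1)) *
        L.coupling (R.reflectCoupling R.Λp a) k := by
  have hlen := h.len_eq
  have hside : L.v k ∈ R.Λm ↔ L.v (k + 1) ∈ R.Λm :=
    (h.mem_Λm_iff hb hk.le).trans (h.mem_Λm_iff hb hk).symm
  rw [L.coupling_of_lt _ (by omega), L.coupling_of_lt _ (by omega),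
    ← R.reflectCoupling_mirror ha (h.isLoopOf.lt hb (by omega)) (h.isLoopOf.lt hb (by omega)) hside,
    h.θ_v k (by omega), h.θ_v (k + 1) (by omega), show 2 * M + 1 - (k + 1) = 2 * M - k by omega,
    show 2 * M + 1 - k = 2 * M - k + 1 by omega]

lemma prod_reflectCoupling_neg (h : IsMirrorLoop R L M) (hb : IsColoredGraph (4 * N) bonds)
    (ha : ∀ i j, a j i = -a i j)
    (hne : ∀ k < L.len, L.coupling (R.reflectCoupling R.Λp a) k ≠ 0) :
    ∏ k ∈ Finset.range L.len, L.coupling (R.reflectCoupling R.Λp a) k < 0 := by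
  have hlen := h.len_eq
  have hv0 : L.v 0 < 4 * N := h.isLoopOf.lt hb (by omega)
  have hvM : L.v M < 4 * N := h.isLoopOf.lt hb (by omega)
  have hmid : L.coupling (R.reflectCoupling R.Λp a) M = a (L.v M) (R.θ (L.v M)) := by
    rw [h.coupling_mid, R.reflectCoupling_crossing a hvM]
  have hlast : L.coupling (R.reflectCoupling R.Λp a) (2 * M + 1) = -a (L.v 0) (R.θ (L.v 0)) := by
    have hcross := R.reflectCoupling_crossing a (R.mapsV _ hv0)
    rw [R.invol _ hv0] at hcross
    rw [h.coupling_last, hcross, ha]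
  have hpos := R.gaugeSign_crossing_mul_pos ha hv0 hvM (h.mem_Λm_iff hb le_rfl).symm
    (neg_ne_zero.1 (hlast ▸ hne (2 * M + 1) (by omega))) (hmid ▸ hne M (by omega))
  rw [hlen]
  refine prod_range_neg_of_mirror (s := fun k => R.gaugeSign a (L.v k))
    (fun k => R.gaugeSign_mul_self a (L.v k)) (fun k => h.coupling_mirror hb ha)
    (fun k hk => hne k (by omega)) ?_
  rw [hmid, hlast]
  linarith

end IsMirrorLoop

end MirrorLoop

section Vortex

variable {V : Type*} [AddCommGroup V] [Module ℂ V] {n : ℕ} {bonds : List (ℕ × ℕ × BondType)}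
  {b : ℕ → BondType → Module.End ℂ V} {c : ℕ → Module.End ℂ V} {J : ℕ × ℕ → ℝ} {a : ℕ → ℕ → ℝ}
  {ψ : V} {L : Loop}

lemma smul_uOp_of_mem_sector (hb : IsColoredGraph n bonds)
    (hg : IsCliffordOn (ladderGen b c) {p | p.1 < n}) (ha : IsSignedCoupling bonds J a)
    (hJ : ∀ i j, J (i, j) = J (j, i)) (hψ : ψ ∈ sector b J a bonds) {i j : ℕ} {t : BondType}
    (h : (i, j, t) ∈ bonds ∨ (j, i, t) ∈ bonds) :
    (J (i, j) : ℂ) • uOp b (i, j, t) ψ = (a i j : ℂ) • ψ := by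
  rcases h with h | h
  · exact mem_sector.1 hψ _ h
  · rw [hb.uOp_swap hg h, LinearMap.neg_apply, smul_neg, hJ, mem_sector.1 hψ _ h, ha.anti j i,
      Complex.ofReal_neg, neg_smul]

lemma smul_prod_uOp_of_mem_sector (hb : IsColoredGraph n bonds)
    (hg : IsCliffordOn (ladderGen b c) {p | p.1 < n}) (ha : IsSignedCoupling bonds J a)
    (hJ : ∀ i j, J (i, j) = J (j, i)) (hψ : ψ ∈ sector b J a bonds) (hL : L.IsLoopOf bonds)
    {m : ℕ} (hm : m ≤ L.len) :
    ((∏ k ∈ Finset.range m, L.coupling (fun i j => J (i, j)) k : ℝ) : ℂ) •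
        ((List.range m).map fun k => uOp b (L.v k, L.v ((k + 1) % L.len), L.t k)).prod ψ =
      ((∏ k ∈ Finset.range m, L.coupling a k : ℝ) : ℂ) • ψ := by
  induction m with
  | zero => rfl
  | succ m ih =>
    have hu : (L.coupling (fun i j => J (i, j)) m : ℂ) •
        uOp b (L.v m, L.v ((m + 1) % L.len), L.t m) ψ = (L.coupling a m : ℂ) • ψ :=
      smul_uOp_of_mem_sector hb hg ha hJ hψ (hL.2.2 m hm)
    rw [List.range_succ, List.map_append, List.prod_append, Finset.prod_range_succ,
      Finset.prod_range_succ, List.map_singleton, List.prod_singleton, Module.End.mul_apply,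
      Complex.ofReal_mul, Complex.ofReal_mul, mul_smul, ← map_smul,
      hu, map_smul, smul_comm, ih (Nat.le_of_succ_le hm), smul_smul, mul_comm]

lemma vortexOp_apply_of_prod_neg (hb : IsColoredGraph n bonds)
    (hg : IsCliffordOn (ladderGen b c) {p | p.1 < n}) (ha : IsSignedCoupling bonds J a)
    (hJ : ∀ i j, J (i, j) = J (j, i)) (hψ : ψ ∈ sector b J a bonds) (hL : L.IsLoopOf bonds)
    (hneg : ∏ k ∈ Finset.range L.len, L.coupling a k < 0) :
    vortexOp b L ψ =
      ((Real.sign (∏ k ∈ Finset.range L.len, L.coupling (fun i j => J (i, j)) k) : ℝ) : ℂ) • ψ := by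
  have heigen := smul_prod_uOp_of_mem_sector hb hg ha hJ hψ hL le_rfl
  have habs := hL.abs_prod_coupling ha
  set A := ∏ k ∈ Finset.range L.len, L.coupling a k
  set P := ∏ k ∈ Finset.range L.len, L.coupling (fun i j => J (i, j)) k
  have hP : P ≠ 0 := abs_pos.1 (habs ▸ abs_pos.2 hneg.ne)
  have hsign : -A = P * Real.sign P := by
    rw [← abs_of_neg hneg, habs]
    rcases hP.lt_or_gt with h | h
    · rw [Real.sign_of_neg h, abs_of_neg h, mul_neg_one]
    · rw [Real.sign_of_pos h, abs_of_pos h, mul_one]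
  refine smul_right_injective V (Complex.ofReal_ne_zero.2 hP) ?_
  beta_reduce
  rw [vortexOp, LinearMap.neg_apply, smul_neg, heigen, ← neg_smul, smul_smul, ← Complex.ofReal_neg,
    hsign, Complex.ofReal_mul]

end Vortex

theorem reflection_symmetric_loop_vortex_configuration_fermionic_general
    {V : Type*} [NormedAddCommGroup V] [InnerProductSpace ℂ V] [FiniteDimensional ℂ V]
    [Nontrivial V] {N : ℕ} {bonds : List (ℕ × ℕ × BondType)} (hb : IsColoredGraph (4 * N) bonds)
    (R : LadderReflection N bonds) {J : ℕ × ℕ → ℝ} (hJsymm : ∀ i j, J (i, j) = J (j, i))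
    (hJrefl : ∀ e ∈ bonds, |J (R.θ e.1, R.θ e.2.1)| = |J (e.1, e.2.1)|)
    {b : ℕ → BondType → (V →ₗ[ℂ] V)} {c : ℕ → (V →ₗ[ℂ] V)} (hbc : IsLadderMajorana N b c)
    {L : Loop} (hL : L.IsLoopOf bonds) {LL : ℕ} (hlen : L.len = 2 * LL)
    (hnondeg : ∀ k < L.len, J (L.v k, L.v ((k + 1) % L.len)) ≠ 0)
    (hrefl : ∀ k < L.len, R.θ (L.v k) = L.v (2 * LL - 1 - k)) :
    ∃ ψ : V,
      Module.End.HasEigenvector (fermH J b c bonds)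
        ((leastEig (fermH J b c bonds) : ℝ) : ℂ) ψ ∧
      vortexOp b L ψ =
        ((Real.sign (∏ k ∈ Finset.range L.len,
          J (L.v k, L.v ((k + 1) % L.len))) : ℝ) : ℂ) • ψ := by
  obtain ⟨M, rfl⟩ : ∃ M, LL = M + 1 := Nat.exists_eq_add_one.2 (by have := hL.1; omega)
  have hmirror : IsMirrorLoop R L M := ⟨hL, hlen, hrefl⟩
  obtain ⟨a, ha, ψ, hψ, hground⟩ :=
    R.exists_leastEig_mem_sector_reflectCoupling hb hbc hJsymm hJrefl
  have ha' := R.isSignedCoupling_reflectCoupling hJsymm hJrefl ha fun _ => R.lt_of_mem_Λp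
  have hneg := hmirror.prod_reflectCoupling_neg hb ha.anti fun k hk =>
    hL.coupling_ne_zero ha' hk (hnondeg k hk)
  exact ⟨ψ, hground, vortexOp_apply_of_prod_neg hb hbc.isCliffordOn ha' hJsymm hψ hL hneg⟩

/-- Let `θ` be a reflection of the open or closed ladder of length
`N`, let the symmetric real couplings satisfy `|J_{(θi, θj)}| = |J_{(ij)}|` on all
bonds, and let `H̃` be the fermionic ladder Hamiltonian built from a Majorana family
`(b_k^x, b_k^y, b_k^z, c_k)`. Let `C = (i_1, …, i_{2L})` be a loop of the ladder with
all couplings on its bonds nonzero and with `θ i_k = i_{2L+1-k}` (so `θ(C) = -C`).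
Then there is an eigenvector `ψ` of `H̃` for its least eigenvalue with
`B̃(C) ψ = sgn(∏_{(ij)∈C} J_{(ij)}) ψ`; in particular, if all the couplings have the
same sign, `C` is vortex-free in this ground state. -/
theorem reflection_symmetric_loop_vortex_configuration_fermionic
    {V : Type*} [NormedAddCommGroup V] [InnerProductSpace ℂ V]
    [FiniteDimensional ℂ V] [Nontrivial V]
    (N : ℕ) (hN : 2 ≤ N)
    (bonds : List (ℕ × ℕ × BondType))
    (hbonds : bonds = openBonds N ∨ bonds = closedBonds N)
    (R : LadderReflection N bonds)
    (J : ℕ × ℕ → ℝ) (hJsymm : ∀ i j, J (i, j) = J (j, i))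
    (hJrefl : ∀ e ∈ bonds, |J (R.θ e.1, R.θ e.2.1)| = |J (e.1, e.2.1)|)
    (b : ℕ → BondType → (V →ₗ[ℂ] V)) (c : ℕ → (V →ₗ[ℂ] V))
    (hbc : IsLadderMajorana N b c)
    (L : Loop) (hL : L.IsLoopOf bonds)
    (LL : ℕ) (hLL : 1 ≤ LL) (hlen : L.len = 2 * LL)
    (hnondeg : ∀ k < L.len, J (L.v k, L.v ((k + 1) % L.len)) ≠ 0)
    (hrefl : ∀ k < L.len, R.θ (L.v k) = L.v (2 * LL - 1 - k)) :
    ∃ ψ : V,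
      Module.End.HasEigenvector (fermH J b c bonds)
        ((leastEig (fermH J b c bonds) : ℝ) : ℂ) ψ ∧
      vortexOp b L ψ =
        ((Real.sign (∏ k ∈ Finset.range L.len,
          J (L.v k, L.v ((k + 1) % L.len))) : ℝ) : ℂ) • ψ := by
  exact reflection_symmetric_loop_vortex_configuration_fermionic_general
    (isColoredGraph_of_ladder hN hbonds) R hJsymm hJrefl hbc hL hlen hnondeg hrefl
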